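/- For every natural number n, the number of permutations of length n avoiding all three of the patterns 2143, 3142, and 246135 equals the number of permutations of length n avoiding both of the patterns 2413 and 3142. In other words, the set of patterns {2143, 3142, 246135} is Wilf-equivalent to the set of patterns {2413, 3142}. -/

import Mathlib

/-- `π` contains the pattern `σ`: there is a strictly increasing choice of positions
on which `π` is order-isomorphic to `σ`. -/
def Contains {n k : ℕ} (π : Equiv.Perm (Fin n)) (σ : Equiv.Perm (Fin k)) : Prop :=
  ∃ f : Fin k → Fin n, StrictMono f ∧ ∀ a b : Fin k, σ a < σ b ↔ π (f a) < π (f b)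

/-- `π` avoids the pattern `σ`. -/
def Avoids {n k : ℕ} (π : Equiv.Perm (Fin n)) (σ : Equiv.Perm (Fin k)) : Prop :=
  ¬ Contains π σ
noncomputable def p2143 : Equiv.Perm (Fin 4) := Equiv.ofBijective ![1, 0, 3, 2] (by decide)
noncomputable def p3142 : Equiv.Perm (Fin 4) := Equiv.ofBijective ![2, 0, 3, 1] (by decide)
noncomputable def p246135 : Equiv.Perm (Fin 6) := Equiv.ofBijective ![1, 3, 5, 0, 2, 4] (by decide)
noncomputable def p2413 : Equiv.Perm (Fin 4) := Equiv.ofBijective ![1, 3, 0, 2] (by decide)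

/-!
A word is uniquely a skew sum of skew indecomposable words, so the series `F` of the words avoiding
2143, 3142 and 246135 satisfies `F = 1 + F * E 0`, where `E 0` counts their skew components.

A skew component that ends with its maximum is an arbitrary word of the class followed by that
maximum. Any other is `I ++ P ++ C`, where `C` is the last skew component of what follows the
maximum, the nonempty block `P` lies above `I` and `C`, and `I` is nonempty, increasing and below
the maximum of `C`. To continue with `C`, the letters of `I` must be remembered as a prefix that
constrains it: the absence of 246135 amounts to no ascent of `C` being interleaved with two
letters of the prefix. Counting such pairs with `j` letters in the prefix, and removing the first
letter of the prefix, gives a system of functional equations in `j` that determines all the series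
modulo every power of `X`.

For the separable permutations, which avoid 2413 and 3142, let `B` be the series of all of them and
`K` that of the skew indecomposable ones. Reversal gives `2 * K = B - 1 + X`, because exactly one of
a separable permutation of length at least 2 and its reversal is skew indecomposable. With
`(2 - B) * G = 1`, the series `K * G ^ j` and `B * G ^ j` solve the system above, hence `F = B`.
-/

namespace WilfEquivalence

open scoped List PowerSeries

section Sublist

variable {α : Type*} {X Y L : List α} {a b : α}

theorem pair_sublist_append_iff :
    [a, b] <+ X ++ Y ↔ [a, b] <+ X ∨ (a ∈ X ∧ b ∈ Y) ∨ [a, b] <+ Y := by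
  constructor
  · intro h
    obtain ⟨l₁, l₂, h, h₁, h₂⟩ := List.sublist_append_iff.1 h
    rcases l₁ with _ | ⟨_, _ | ⟨_, _⟩⟩ <;>
      simp only [List.nil_append, List.cons_append, List.cons.injEq, List.nil_eq,
        List.append_eq_nil_iff] at h
    · exact .inr (.inr (h ▸ h₂))
    · obtain ⟨rfl, rfl⟩ := h
      exact .inr (.inl ⟨by simpa using h₁, by simpa using h₂⟩)
    · obtain ⟨rfl, rfl, rfl, -⟩ := h
      exact .inl h₁
  · rintro (h | ⟨ha, hb⟩ | h)
    · exact h.trans (List.sublist_append_left X Y)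
    · exact (List.singleton_sublist.2 ha).append (List.singleton_sublist.2 hb)
    · exact h.trans (List.sublist_append_right X Y)

theorem fst_mem_of_pair_sublist (h : [a, b] <+ L) : a ∈ L :=
  h.subset (by simp)

theorem snd_mem_of_pair_sublist (h : [a, b] <+ L) : b ∈ L :=
  h.subset (by simp)

theorem exists_eq_append_of_pair_imp {q : α → Prop}
    (h : ∀ c d, [c, d] <+ L → q c → q d) :
    ∃ X Y, L = X ++ Y ∧ (∀ x ∈ X, ¬ q x) ∧ ∀ y ∈ Y, q y := by
  induction L with
  | nil => exact ⟨[], [], by simp⟩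
  | cons x L ih =>
    by_cases hx : q x
    · exact ⟨[], x :: L, rfl, by simp,
        List.forall_mem_cons.2 ⟨hx, fun y hy => h x y (by simpa using hy) hx⟩⟩
    · obtain ⟨X, Y, rfl, hX, hY⟩ := ih fun c d hcd => h c d (hcd.cons x)
      exact ⟨x :: X, Y, rfl, List.forall_mem_cons.2 ⟨hx, hX⟩, hY⟩

theorem exists_eq_append_cons_of_exists_mem {q : α → Prop} (h : ∃ x ∈ L, q x) :
    ∃ X e Y, L = X ++ e :: Y ∧ q e ∧ ∀ y ∈ Y, ¬ q y := by
  induction L with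
  | nil => simp at h
  | cons x L ih =>
    by_cases hL : ∃ x ∈ L, q x
    · obtain ⟨X, e, Y, rfl, he, hY⟩ := ih hL
      exact ⟨x :: X, e, Y, rfl, he, hY⟩
    · exact ⟨[], x, L, rfl, by simp_all, by simpa using hL⟩

end Sublist

section Above

/-- Every entry of `X` exceeds every entry of `Y`, so that `X ++ Y` is a skew sum. -/
def Above {α : Type*} [LT α] (X Y : List α) : Prop :=
  ∀ x ∈ X, ∀ y ∈ Y, y < x

instance {α : Type*} [LT α] [DecidableLT α] (X Y : List α) : Decidable (Above X Y) :=
  inferInstanceAs (Decidable (∀ x ∈ X, ∀ y ∈ Y, y < x))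

variable {α : Type*} [LT α] {X Y Z : List α}

theorem above_nil_left : Above [] Y := by
  simp [Above]

theorem above_nil_right : Above X [] := by
  simp [Above]

theorem above_append_left : Above (X ++ Y) Z ↔ Above X Z ∧ Above Y Z :=
  List.forall_mem_append

theorem above_append_right : Above X (Y ++ Z) ↔ Above X Y ∧ Above X Z := by
  simp only [Above, List.forall_mem_append, forall_and]

/-- The nonempty words that are not a skew sum of two nonempty words. -/
def SkewIndecomposable {α : Type*} [LT α] (l : List α) : Prop :=
  l ≠ [] ∧ ∀ X Y, l = X ++ Y → Above X Y → X = [] ∨ Y = []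

theorem exists_above_of_not_skewIndecomposable {l : List α} (hl : l ≠ [])
    (h : ¬ SkewIndecomposable l) : ∃ X Y, l = X ++ Y ∧ X ≠ [] ∧ Y ≠ [] ∧ Above X Y := by
  simp only [SkewIndecomposable, not_and, not_forall, not_or] at h
  obtain ⟨X, Y, hXY, hab, hX, hY⟩ := h hl
  exact ⟨X, Y, hXY, hX, hY, hab⟩

theorem skewIndecomposable_of_take_drop {l : List α} (hl : l ≠ [])
    (h : ∀ k < l.length, Above (l.take k) (l.drop k) → k = 0) : SkewIndecomposable l := by
  refine ⟨hl, ?_⟩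
  rintro X Y rfl hab
  by_cases hY : Y = []
  · exact .inr hY
  · have := h X.length (by simpa using List.length_pos_iff.2 hY) (by simpa using hab)
    exact .inl (List.length_eq_zero_iff.1 this)

theorem exists_eq_append_skewIndecomposable (l : List α) (hl : l ≠ []) :
    ∃ X C, l = X ++ C ∧ Above X C ∧ SkewIndecomposable C := by
  by_cases h : SkewIndecomposable l
  · exact ⟨[], l, rfl, above_nil_left, h⟩
  · obtain ⟨X, Y, rfl, hX, hY, hab⟩ := exists_above_of_not_skewIndecomposable hl h
    have : 0 < X.length := List.length_pos_iff.2 hX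
    obtain ⟨Z, C, rfl, hZC, hC⟩ := exists_eq_append_skewIndecomposable Y hY
    obtain ⟨-, hXC⟩ := above_append_right.1 hab
    exact ⟨X ++ Z, C, by simp, above_append_left.2 ⟨hXC, hZC⟩, hC⟩
termination_by l.length
decreasing_by all_goals grind

theorem eq_of_append_skewIndecomposable {X' C C' : List α} (h : X ++ C = X' ++ C')
    (hX : Above X C) (hX' : Above X' C') (hC : SkewIndecomposable C)
    (hC' : SkewIndecomposable C') : X = X' ∧ C = C' := by
  rcases List.append_eq_append_iff.1 h with ⟨Z, rfl, rfl⟩ | ⟨Z, rfl, rfl⟩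
  · have := (hC.2 Z C' rfl (above_append_left.1 hX').2).resolve_right hC'.1
    simp [this]
  · have := (hC'.2 Z C rfl (above_append_left.1 hX).2).resolve_right hC.1
    simp [this]

end Above

section Component

variable {α : Type*} [Preorder α]

theorem exists_component_of_pair_sublist (L : List α) {c d : α} (hcd : [c, d] <+ L)
    (hlt : c < d) :
    ∃ B₀ C B₁, L = B₀ ++ C ++ B₁ ∧ Above B₀ C ∧ Above (B₀ ++ C) B₁ ∧
      SkewIndecomposable C ∧ c ∈ C ∧ d ∈ C := by
  by_cases h : SkewIndecomposable L
  · exact ⟨[], L, [], by simp, above_nil_left, above_nil_right, h,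
      fst_mem_of_pair_sublist hcd, snd_mem_of_pair_sublist hcd⟩
  have hL : L ≠ [] := List.ne_nil_of_mem (fst_mem_of_pair_sublist hcd)
  obtain ⟨X, Y, rfl, hX, hY, hab⟩ := exists_above_of_not_skewIndecomposable hL h
  have : 0 < X.length := List.length_pos_iff.2 hX
  have : 0 < Y.length := List.length_pos_iff.2 hY
  rcases pair_sublist_append_iff.1 hcd with hcd | ⟨hc, hd⟩ | hcd
  · obtain ⟨B₀, C, B₁, rfl, h₀, h₁, hC⟩ := exists_component_of_pair_sublist X hcd hlt
    refine ⟨B₀, C, B₁ ++ Y, by simp, h₀, above_append_right.2 ⟨h₁, ?_⟩, hC⟩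
    exact (above_append_left.1 hab).1
  · exact absurd (hab c hc d hd) hlt.asymm
  · obtain ⟨B₀, C, B₁, rfl, h₀, h₁, hC⟩ := exists_component_of_pair_sublist Y hcd hlt
    simp only [above_append_left, above_append_right] at hab h₁
    refine ⟨X ++ B₀, C, B₁, by simp, ?_, ?_, hC⟩ <;>
      simp only [above_append_left] <;> tauto
termination_by L.length
decreasing_by all_goals grind

end Component

section Straddles

/-- Some ascent of `L` passes from below `a` to above `a`. -/
def Straddles {α : Type*} [LT α] (L : List α) (a : α) : Prop :=
  ∃ c d, [c, d] <+ L ∧ c < a ∧ a < d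

variable {α : Type*} [LinearOrder α] {C : List α} {a : α}

theorem exists_eq_append_of_not_straddles (ha : a ∉ C) (h : ¬ Straddles C a) :
    ∃ X Y, C = X ++ Y ∧ (∀ x ∈ X, a < x) ∧ ∀ y ∈ Y, y < a := by
  have hdown : ∀ c d, [c, d] <+ C → c < a → d < a := fun c d hcd hca =>
    lt_of_le_of_ne (not_lt.1 fun had => h ⟨c, d, hcd, hca, had⟩)
      (ne_of_mem_of_not_mem (snd_mem_of_pair_sublist hcd) ha)
  obtain ⟨X, Y, rfl, hX, hY⟩ := exists_eq_append_of_pair_imp hdown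
  refine ⟨X, Y, rfl, fun x hx => lt_of_le_of_ne (not_lt.1 (hX x hx)) ?_, hY⟩
  rintro rfl
  exact ha (List.mem_append_left _ hx)

theorem SkewIndecomposable.straddles (hC : SkewIndecomposable C) (ha : a ∉ C)
    (hlow : ∃ c ∈ C, c < a) (hhigh : ∃ d ∈ C, a < d) : Straddles C a := by
  by_contra h
  obtain ⟨X, Y, rfl, hX, hY⟩ := exists_eq_append_of_not_straddles ha h
  obtain ⟨c, hc, hca⟩ := hlow
  obtain ⟨d, hd, had⟩ := hhigh
  rcases hC.2 X Y rfl fun x hx y hy => (hY y hy).trans (hX x hx) with rfl | rfl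
  · exact (hY d (by simpa using hd)).asymm had
  · exact (hX c (by simpa using hc)).asymm hca

end Straddles

section Pattern

/-- The word `p`, read as a pattern, occurs in `l`: the map `f` sends the letters of `p` to the
entries of a subsequence of `l` that is order isomorphic to `p`. -/
def Occurs {α : Type*} [Preorder α] (p : List ℕ) (l : List α) : Prop :=
  ∃ f : ℕ → α, StrictMonoOn f {x | x ∈ p} ∧ p.map f <+ l

/-- The word `l` avoids every pattern of the list `B`. -/
def AvoidsAll {α : Type*} [Preorder α] (B : List (List ℕ)) (l : List α) : Prop :=
  ∀ p ∈ B, ¬ Occurs p l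

section Preorder

variable {α : Type*} [Preorder α] {p : List ℕ} {B : List (List ℕ)} {l l' X Y : List α} {a : α}

theorem Occurs.of_sublist (h : Occurs p l) (hl : l <+ l') : Occurs p l' :=
  let ⟨f, hf, hfl⟩ := h
  ⟨f, hf, hfl.trans hl⟩

theorem occurs_of_map_getD {v : List α} (hv : v.Pairwise (· < ·)) (hp : ∀ i ∈ p, i < v.length)
    (h : p.map (fun i => v.getD i a) <+ l) : Occurs p l := by
  refine ⟨_, fun i hi j hj hij => ?_, h⟩
  have := List.pairwise_iff_getElem.1 hv i j (hp i hi) (hp j hj) hij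
  simpa [hp i hi, hp j hj] using this

theorem Occurs.reverse (h : Occurs p l) : Occurs p.reverse l.reverse :=
  let ⟨f, hf, hfl⟩ := h
  ⟨f, by simpa using hf, by simpa using hfl⟩

theorem Occurs.of_append_of_above (hp : SkewIndecomposable p) (hXY : Above X Y)
    (h : Occurs p (X ++ Y)) : Occurs p X ∨ Occurs p Y := by
  obtain ⟨f, hf, hfl⟩ := h
  obtain ⟨s₁, s₂, hs, h₁, h₂⟩ := List.sublist_append_iff.1 hfl
  obtain ⟨p₁, p₂, rfl, rfl, rfl⟩ := List.map_eq_append_iff.1 hs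
  have hp₁₂ : Above p₁ p₂ := fun x hx y hy =>
    (hf.lt_iff_lt (by simp [hy]) (by simp [hx])).1
      (hXY _ (h₁.subset (List.mem_map_of_mem hx)) _ (h₂.subset (List.mem_map_of_mem hy)))
  rcases hp.2 p₁ p₂ rfl hp₁₂ with rfl | rfl
  · exact .inr ⟨f, hf, h₂⟩
  · exact .inl ⟨f, by simpa using hf, by simpa using h₁⟩

theorem Occurs.of_cons_min (hp : ∀ x q, p = x :: q → ∃ y ∈ q, y < x) (ha : ∀ x ∈ l, a < x)
    (h : Occurs p (a :: l)) : Occurs p l := by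
  obtain ⟨f, hf, hfl⟩ := h
  rcases List.sublist_cons_iff.1 hfl with hfl | ⟨r, hr, hrl⟩
  · exact ⟨f, hf, hfl⟩
  · obtain ⟨x, q, rfl, rfl, rfl⟩ := List.map_eq_cons_iff.1 hr
    obtain ⟨y, hy, hyx⟩ := hp x q rfl
    have hlt : f y < f x := hf (by simp [hy]) (by simp) hyx
    exact absurd hlt (ha _ (hrl.subset (List.mem_map_of_mem hy))).asymm

theorem Occurs.of_concat_max (hp : ∀ q x, p = q ++ [x] → ∃ y ∈ q, x < y) (ha : ∀ x ∈ l, x < a)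
    (h : Occurs p (l ++ [a])) : Occurs p l := by
  obtain ⟨f, hf, hfl⟩ := h
  obtain ⟨s, r, hs, hsl, hr⟩ := List.sublist_append_iff.1 hfl
  obtain ⟨q, t, rfl, rfl, rfl⟩ := List.map_eq_append_iff.1 hs
  rcases t with _ | ⟨x, _ | ⟨x', t⟩⟩
  · exact ⟨f, by simpa using hf, by simpa using hsl⟩
  · obtain ⟨y, hy, hxy⟩ := hp q x rfl
    have hlt : f x < f y := hf (by simp) (by simp [hy]) hxy
    have hxa : f x = a := by simpa using hr
    exact absurd hlt (hxa ▸ (ha _ (hsl.subset (List.mem_map_of_mem hy))).asymm)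
  · simpa using hr.length_le

theorem AvoidsAll.sublist (h : AvoidsAll B l) (hl : l' <+ l) : AvoidsAll B l' :=
  fun p hp hpl => h p hp (hpl.of_sublist hl)

theorem avoidsAll_of_length_lt (h : ∀ p ∈ B, l.length < p.length) : AvoidsAll B l := by
  rintro p hp ⟨f, -, hf⟩
  exact (h p hp).not_ge (by simpa using hf.length_le)

theorem AvoidsAll.reverse (hB : ∀ p ∈ B, p.reverse ∈ B) (h : AvoidsAll B l) :
    AvoidsAll B l.reverse :=
  fun p hp hpl => h _ (hB p hp) (by simpa using hpl.reverse)

theorem AvoidsAll.append_of_above (hB : ∀ p ∈ B, SkewIndecomposable p) (hXY : Above X Y)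
    (hX : AvoidsAll B X) (hY : AvoidsAll B Y) : AvoidsAll B (X ++ Y) :=
  fun p hp h => (h.of_append_of_above (hB p hp) hXY).elim (hX p hp) (hY p hp)

theorem avoidsAll_map_iff {β : Type*} [LinearOrder β] [Nonempty β] {l : List β} {g : β → α}
    (hg : StrictMono g) : AvoidsAll B (l.map g) ↔ AvoidsAll B l := by
  suffices h : ∀ p, Occurs p (l.map g) ↔ Occurs p l by simp only [AvoidsAll, h]
  refine fun p => ⟨?_, fun ⟨f, hf, hfl⟩ => ⟨g ∘ f, hg.comp_strictMonoOn hf, ?_⟩⟩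
  · rintro ⟨f, hf, hfl⟩
    obtain ⟨l', hl', hpl'⟩ := List.sublist_map_iff.1 hfl
    have hleft := Function.leftInverse_invFun hg.injective
    have hright : ∀ x ∈ p, g (Function.invFun g (f x)) = f x := by
      intro x hx
      obtain ⟨y, -, hy⟩ := List.mem_map.1 (hpl' ▸ List.mem_map_of_mem hx)
      rw [← hy, hleft]
    refine ⟨Function.invFun g ∘ f, fun x hx y hy hxy => hg.lt_iff_lt.1 ?_, ?_⟩
    · simpa only [Function.comp_apply, hright x hx, hright y hy] using hf hx hy hxy
    · rwa [← List.map_map, hpl', List.map_map, hleft.comp_eq_id, List.map_id]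
  · simpa using hfl.map g

/-- The patterns 2143, 3142 and 246135, with letters counted from 0. -/
def prefixBasis : List (List ℕ) := [[1, 0, 3, 2], [2, 0, 3, 1], [1, 3, 5, 0, 2, 4]]

/-- The patterns 2413 and 3142, with letters counted from 0: the basis of the separable
permutations. -/
def separableBasis : List (List ℕ) := [[1, 3, 0, 2], [2, 0, 3, 1]]

theorem skewIndecomposable_of_mem_prefixBasis : ∀ p ∈ prefixBasis, SkewIndecomposable p := by
  have h : ∀ p ∈ prefixBasis, p ≠ [] ∧ ∀ k < p.length, Above (p.take k) (p.drop k) → k = 0 := by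
    decide
  exact fun p hp => skewIndecomposable_of_take_drop (h p hp).1 (h p hp).2

theorem skewIndecomposable_of_mem_separableBasis :
    ∀ p ∈ separableBasis, SkewIndecomposable p := by
  have h : ∀ p ∈ separableBasis,
      p ≠ [] ∧ ∀ k < p.length, Above (p.take k) (p.drop k) → k = 0 := by
    decide
  exact fun p hp => skewIndecomposable_of_take_drop (h p hp).1 (h p hp).2

set_option synthInstance.maxSize 1000 in
theorem eq_of_above_of_append_mem_prefixBasis {p₁ p₂ p₃ : List ℕ}
    (hp : p₁ ++ p₂ ++ p₃ ∈ prefixBasis) (h₂ : p₂ ≠ []) (h₁ : p₁.Pairwise (· < ·))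
    (h : Above p₂ (p₁ ++ p₃)) : (p₁ = [] ∧ p₃ = []) ∨ (p₁ = [1, 3] ∧ p₃ = [0, 2, 4]) := by
  have key : ∀ p ∈ prefixBasis, ∀ i < 7, ∀ j < 7,
      (p.drop i).take j ≠ [] → (p.take i).Pairwise (· < ·) →
      Above ((p.drop i).take j) (p.take i ++ (p.drop i).drop j) →
      (p.take i = [] ∧ (p.drop i).drop j = []) ∨
        (p.take i = [1, 3] ∧ (p.drop i).drop j = [0, 2, 4]) := by
    decide
  have hlen : ∀ p ∈ prefixBasis, p.length ≤ 6 := by decide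
  have := hlen _ hp
  have := key _ hp p₁.length (by grind) p₂.length (by grind)
  simp_all

theorem AvoidsAll.cons_min (h : AvoidsAll prefixBasis l) (ha : ∀ x ∈ l, a < x) :
    AvoidsAll prefixBasis (a :: l) := by
  refine fun p hp hpl => h p hp (hpl.of_cons_min ?_ ha)
  rintro x q rfl
  have : ∀ p ∈ prefixBasis, ∃ y ∈ p.tail, y < p.head! := by decide
  exact this _ hp

theorem AvoidsAll.concat_max (h : AvoidsAll prefixBasis l) (ha : ∀ x ∈ l, x < a) :
    AvoidsAll prefixBasis (l ++ [a]) := by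
  refine fun p hp hpl => h p hp (hpl.of_concat_max ?_ ha)
  rintro q x rfl
  have : ∀ p ∈ prefixBasis, ∃ y ∈ p.dropLast, p.getLastD 0 < y := by decide
  simpa using this _ hp

end Preorder

section LinearOrder

variable {α : Type*} [LinearOrder α] {L : List α} {a b c d : α}

theorem AvoidsAll.not_peak_after_valley (h : AvoidsAll prefixBasis L) (hL : L.Nodup)
    (hs : [a, b, c, d] <+ L) (hba : b < a) (hbd : b < d) (hac : a < c) : ¬ d < c := by
  intro hdc
  have hnd : [a, b, c, d].Nodup := hL.sublist hs
  rcases lt_or_gt_of_ne (show a ≠ d by grind) with had | hda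
  · exact h [1, 0, 3, 2] (by simp [prefixBasis])
      (occurs_of_map_getD (v := [b, a, d, c]) (a := a) (by simp; grind) (by simp) hs)
  · exact h [2, 0, 3, 1] (by simp [prefixBasis])
      (occurs_of_map_getD (v := [b, d, a, c]) (a := a) (by simp; grind) (by simp) hs)

end LinearOrder

end Pattern

section PrefixedWord

section Preorder

variable {α : Type*} [Preorder α] {J I K L C P X Y : List α} {a b M : α}

/-- No ascent `c < d` of `L` interleaves with two letters `a`, `b` of `J` as `c < a < d < b`. -/
def NonInterleaving (J L : List α) : Prop :=
  ∀ a ∈ J, ∀ b ∈ J, ∀ c d, [c, d] <+ L → c < a → a < d → ¬ d < b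

/-- An increasing word `J` and a word `L` that is not interleaved with `J`, whose concatenation
avoids 2143, 3142 and 246135. -/
structure PrefixedWord (J L : List α) : Prop where
  sorted : J.Pairwise (· < ·)
  avoids : AvoidsAll prefixBasis (J ++ L)
  nonInterleaving : NonInterleaving J L

/-- A prefixed word whose second part `C` is skew indecomposable and has a letter above each letter
of `J`. For `J = []` these are the skew components of the words avoiding 2143, 3142 and 246135; the
prefix `J` collects the letters split off while such a component is dismantled. -/
structure PrefixedComponent (J C : List α) : Prop extends PrefixedWord J C where
  indecomposable : SkewIndecomposable C
  exists_gt : ∀ a ∈ J, ∃ m ∈ C, a < m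

theorem NonInterleaving.mono (h : NonInterleaving J L) (hJ : K ⊆ J) (hL : C <+ L) :
    NonInterleaving K C :=
  fun a ha b hb c d hcd => h a (hJ ha) b (hJ hb) c d (hcd.trans hL)

theorem nonInterleaving_append_iff_left (h : Above J Y) :
    NonInterleaving J (X ++ Y) ↔ NonInterleaving J X := by
  refine ⟨fun hXY => hXY.mono (List.Subset.refl J) (by simp),
    fun hX a ha b hb c d hcd hca had => ?_⟩
  have hd : d ∉ Y := fun hd => had.asymm (h a ha d hd)
  rcases pair_sublist_append_iff.1 hcd with hcd | ⟨-, hd'⟩ | hcd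
  · exact hX a ha b hb c d hcd hca had
  · exact absurd hd' hd
  · exact absurd (snd_mem_of_pair_sublist hcd) hd

theorem nonInterleaving_append_iff_right (h : Above X J) :
    NonInterleaving J (X ++ Y) ↔ NonInterleaving J Y := by
  refine ⟨fun hXY => hXY.mono (List.Subset.refl J) (by simp),
    fun hY a ha b hb c d hcd hca had => ?_⟩
  have hc : c ∉ X := fun hc => hca.asymm (h c hc a ha)
  rcases pair_sublist_append_iff.1 hcd with hcd | ⟨hc', -⟩ | hcd
  · exact absurd (fst_mem_of_pair_sublist hcd) hc
  · exact absurd hc' hc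
  · exact hY a ha b hb c d hcd hca had

theorem nonInterleaving_cons_iff (h : ∀ x ∈ L, a < x) :
    NonInterleaving (a :: J) L ↔ NonInterleaving J L := by
  refine ⟨fun hL => hL.mono (List.subset_cons_self a J) (.refl L),
    fun hL p hp q hq c d hcd hcp hpd => ?_⟩
  rcases List.mem_cons.1 hp with rfl | hp
  · exact absurd hcp (h c (fst_mem_of_pair_sublist hcd)).asymm
  rcases List.mem_cons.1 hq with rfl | hq
  · exact (h d (snd_mem_of_pair_sublist hcd)).asymm
  · exact hL p hp q hq c d hcd hcp hpd

theorem AvoidsAll.insert_block (hK : K.Pairwise (· < ·)) (hC : AvoidsAll prefixBasis (K ++ C))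
    (hKC : NonInterleaving K C)
    (hP : AvoidsAll prefixBasis P) (hPKC : Above P (K ++ C)) :
    AvoidsAll prefixBasis (K ++ P ++ C) := by
  rintro p hp ⟨f, hf, hfl⟩
  obtain ⟨s, s₃, hs, hKP, h₃⟩ := List.sublist_append_iff.1 hfl
  obtain ⟨s₁, s₂, rfl, h₁, h₂⟩ := List.sublist_append_iff.1 hKP
  obtain ⟨q, p₃, rfl, hq, rfl⟩ := List.map_eq_append_iff.1 hs
  obtain ⟨p₁, p₂, rfl, rfl, rfl⟩ := List.map_eq_append_iff.1 hq
  by_cases hp₂ : p₂ = []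
  · subst hp₂
    exact hC _ hp ⟨f, hf, by simpa using h₁.append h₃⟩
  have lt_of_map_lt : ∀ x ∈ p₁ ++ p₂ ++ p₃, ∀ y ∈ p₁ ++ p₂ ++ p₃, f x < f y → x < y :=
    fun x hx y hy => (hf.lt_iff_lt hx hy).1
  have hsorted : p₁.Pairwise (· < ·) :=
    (List.pairwise_map.1 (hK.sublist h₁)).imp_of_mem fun hx hy =>
      lt_of_map_lt _ (by simp [hx]) _ (by simp [hy])
  have habove : Above p₂ (p₁ ++ p₃) := fun x hx y hy =>
    lt_of_map_lt y (by grind) x (by simp [hx]) <|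
      hPKC _ (h₂.subset (List.mem_map_of_mem hx)) _
        ((h₁.append h₃).subset (by rw [← List.map_append]; exact List.mem_map_of_mem hy))
  rcases eq_of_above_of_append_mem_prefixBasis hp hp₂ hsorted habove with
    ⟨rfl, rfl⟩ | ⟨rfl, rfl⟩
  · exact hP _ hp ⟨f, hf, by simpa using h₂⟩
  · have lt : ∀ x ∈ [1, 3] ++ p₂ ++ [0, 2, 4], ∀ y ∈ [1, 3] ++ p₂ ++ [0, 2, 4],
        x < y → f x < f y := fun x hx y hy => hf hx hy
    exact hKC (f 1) (h₁.subset (by simp)) (f 3) (h₁.subset (by simp)) (f 0) (f 2)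
      (.trans (by simp) h₃) (lt 0 (by simp) 1 (by simp) (by simp))
      (lt 1 (by simp) 2 (by simp) (by simp)) (lt 2 (by simp) 3 (by simp) (by simp))

/-- The last letter of `C` exceeds every other letter of `C`. -/
def EndsWithMax (C : List α) : Prop :=
  ∃ L M, C = L ++ [M] ∧ ∀ x ∈ L, x < M

theorem skewIndecomposable_concat_max (hM : ∀ x ∈ L, x < M) :
    SkewIndecomposable (L ++ [M]) := by
  refine ⟨by simp, fun X Y hXY hab => ?_⟩
  rcases List.eq_nil_or_concat' Y with hY | ⟨Y, y, rfl⟩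
  · exact .inr hY
  · rw [← List.append_assoc] at hXY
    obtain ⟨rfl, hy⟩ := List.append_inj' hXY rfl
    obtain rfl : M = y := by simpa using hy
    refine .inl (List.eq_nil_iff_forall_not_mem.2 fun x hx => ?_)
    exact (hab x hx M (by simp)).asymm (hM x (by simp [hx]))

theorem NonInterleaving.concat_max (h : NonInterleaving J L) (hM : ∀ b ∈ J, b < M) :
    NonInterleaving J (L ++ [M]) := by
  intro a ha b hb c d hcd hca had hdb
  rcases pair_sublist_append_iff.1 hcd with hcd | ⟨-, hd⟩ | hcd
  · exact h a ha b hb c d hcd hca had hdb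
  · rw [List.mem_singleton.1 hd] at hdb
    exact hdb.asymm (hM b hb)
  · simpa using hcd.length_le

theorem prefixedComponent_concat_iff (hM : ∀ x ∈ J ++ L, x < M) :
    PrefixedComponent J (L ++ [M]) ↔ PrefixedWord J L := by
  have hJM : ∀ a ∈ J, a < M := fun a ha => hM a (List.mem_append_left L ha)
  have hLM : ∀ x ∈ L, x < M := fun x hx => hM x (List.mem_append_right J hx)
  constructor
  · rintro ⟨⟨hJ, hA, hJL⟩, -, -⟩
    exact ⟨hJ, hA.sublist (by simp), hJL.mono (List.Subset.refl J) (by simp)⟩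
  · rintro ⟨hJ, hA, hJL⟩
    exact ⟨⟨hJ, by simpa using hA.concat_max hM, hJL.concat_max hJM⟩,
      skewIndecomposable_concat_max hLM, fun a ha => ⟨M, by simp, hJM a ha⟩⟩

theorem SkewIndecomposable.cons_append (hC : SkewIndecomposable C) (ha : ∃ m ∈ C, a < m) :
    SkewIndecomposable (a :: L ++ C) := by
  refine ⟨by simp, fun X Y hXY hab => ?_⟩
  obtain ⟨m, hm, ham⟩ := ha
  rcases X with _ | ⟨x, X⟩
  · exact .inl rfl
  obtain ⟨rfl, hLC⟩ : a = x ∧ L ++ C = X ++ Y := by simpa using hXY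
  have hmY : m ∉ Y := fun hmY => ham.asymm (hab a (by simp) m hmY)
  rcases List.append_eq_append_iff.1 hLC with ⟨Z, rfl, rfl⟩ | ⟨Z, rfl, rfl⟩
  · have hZY : Above Z Y := fun z hz => hab z (by simp [hz])
    rcases hC.2 Z Y rfl hZY with rfl | hY
    · exact absurd hm hmY
    · exact .inr hY
  · exact absurd (List.mem_append_right Z hm) hmY

theorem PrefixedComponent.insert_block (h : PrefixedComponent (J ++ I) C) (hI : I ≠ [])
    (hP : AvoidsAll prefixBasis P) (hPC : Above P (J ++ I ++ C)) :
    PrefixedComponent J (I ++ P ++ C) := by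
  obtain ⟨⟨hJI, hA, hint⟩, hC, hgt⟩ := h
  obtain ⟨hJ, -, hJI'⟩ := List.pairwise_append.1 hJI
  refine ⟨⟨hJ, ?_, ?_⟩, ?_, ?_⟩
  · simpa using hA.insert_block hJI hint hP hPC
  · have hIJ : Above (I ++ P) J := above_append_left.2
      ⟨fun i hi a ha => hJI' a ha i hi, (above_append_right.1 (above_append_right.1 hPC).1).1⟩
    exact (nonInterleaving_append_iff_right hIJ).2 (hint.mono (by simp) (.refl C))
  · obtain ⟨i, I, rfl⟩ := List.exists_cons_of_ne_nil hI
    exact hC.cons_append (hgt i (by simp))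
  · intro a ha
    obtain ⟨m, hm, ham⟩ := hgt a (by simp [ha])
    exact ⟨m, by simp [hm], ham⟩

theorem not_endsWithMax_of_above (hP : P ≠ []) (hC : C ≠ []) (hPC : Above P C) :
    ¬ EndsWithMax (L ++ P ++ C) := by
  rintro ⟨X, M, h, hM⟩
  obtain ⟨p, hp⟩ := List.exists_mem_of_ne_nil P hP
  obtain ⟨C, c, rfl⟩ := (List.eq_nil_or_concat' C).resolve_left hC
  rw [← List.append_assoc] at h
  obtain ⟨rfl, hc⟩ := List.append_inj' h rfl
  obtain rfl : c = M := by simpa using hc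
  exact (hM p (by simp [hp])).asymm (hPC p hp c (by simp))

theorem pair_sublist_of_pairwise_lt (hK : K.Pairwise (· < ·)) (ha : a ∈ K) (hb : b ∈ K)
    (hab : a < b) : [a, b] <+ K := by
  obtain ⟨s, t, rfl⟩ := List.append_of_mem ha
  have hbt : b ∈ t := by grind
  exact ((List.singleton_sublist.2 hbt).cons_cons a).trans (List.sublist_append_right s _)

theorem forall_lt_and_pairwise_of_pair_lt (hI : I ≠ []) (hIM : ∀ x ∈ I, x < M)
    (h : ∀ a b, [a, b] <+ J ++ I → b < M → a < b) :
    (∀ x ∈ J ++ I, x < M) ∧ (J ++ I).Pairwise (· < ·) := by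
  obtain ⟨i, hi⟩ := List.exists_mem_of_ne_nil I hI
  have hJ : ∀ x ∈ J, x < i := fun x hx =>
    h x i (pair_sublist_append_iff.2 (.inr (.inl ⟨hx, hi⟩))) (hIM i hi)
  have hlt : ∀ x ∈ J ++ I, x < M :=
    List.forall_mem_append.2 ⟨fun x hx => (hJ x hx).trans (hIM i hi), hIM⟩
  exact ⟨hlt, List.pairwise_iff_forall_sublist.2 fun {a b} hab =>
    h a b hab (hlt b (snd_mem_of_pair_sublist hab))⟩

theorem eq_of_insert_block_of_suffix {I' P' C' : List α} (h : I ++ P ++ C = I' ++ P' ++ C')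
    (hsuf : C' <:+ C) (hC : SkewIndecomposable C) (hC' : C' ≠ []) (hP : P ≠ [])
    (hI' : ∀ a ∈ I', ∃ m ∈ C', a < m) (hPC : Above P C) (hPC' : Above P' C') : C = C' := by
  obtain ⟨Z, rfl⟩ := hsuf
  obtain ⟨p, P, rfl⟩ := List.exists_cons_of_ne_nil hP
  have hIP : I ++ ((p :: P) ++ Z) = I' ++ P' := List.append_cancel_right (by simpa using h)
  rcases List.append_eq_append_iff.1 hIP with ⟨W, rfl, hW⟩ | ⟨W, rfl, rfl⟩
  · rcases W with _ | ⟨w, W⟩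
    · have hZ : Above Z C' := fun z hz => hPC' z (by simp [← show _ = P' from hW, hz])
      simp [(hC.2 Z C' rfl hZ).resolve_right hC']
    · obtain ⟨rfl, -⟩ : p = w ∧ _ := by simpa using hW
      obtain ⟨m, hm, hpm⟩ := hI' p (by simp)
      exact absurd hpm (hPC p (by simp) m (by simp [hm])).asymm
  · have hZ : Above Z C' := fun z hz => hPC' z (by simp [hz])
    simp [(hC.2 Z C' rfl hZ).resolve_right hC']

theorem eq_of_append_of_exists_gt {I' P' : List α} (h : I ++ P = I' ++ P')
    (hI : ∀ a ∈ I, ∃ m ∈ C, a < m) (hI' : ∀ a ∈ I', ∃ m ∈ C, a < m) (hPC : Above P C)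
    (hPC' : Above P' C) : I = I' ∧ P = P' := by
  have hdisj : ∀ a, (∃ m ∈ C, a < m) → (∀ m ∈ C, m < a) → False :=
    fun a ⟨m, hm, ham⟩ ha => ham.asymm (ha m hm)
  rcases List.append_eq_append_iff.1 h with ⟨W, rfl, rfl⟩ | ⟨W, rfl, rfl⟩ <;>
  rcases W with _ | ⟨w, W⟩
  · simp
  · exact (hdisj w (hI' w (by simp)) (hPC w (by simp))).elim
  · simp
  · exact (hdisj w (hI w (by simp)) (hPC' w (by simp))).elim

theorem eq_of_insert_block {I' P' C' : List α} (h : I ++ P ++ C = I' ++ P' ++ C')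
    (hC : SkewIndecomposable C) (hC' : SkewIndecomposable C') (hP : P ≠ []) (hP' : P' ≠ [])
    (hI : ∀ a ∈ I, ∃ m ∈ C, a < m) (hI' : ∀ a ∈ I', ∃ m ∈ C', a < m) (hPC : Above P C)
    (hPC' : Above P' C') : I = I' ∧ P = P' ∧ C = C' := by
  obtain rfl : C = C' := by
    rcases List.append_eq_append_iff.1 h with ⟨Z, -, rfl⟩ | ⟨Z, -, rfl⟩
    · exact eq_of_insert_block_of_suffix h ⟨Z, rfl⟩ hC hC'.1 hP hI' hPC hPC'
    · exact (eq_of_insert_block_of_suffix h.symm ⟨Z, rfl⟩ hC' hC.1 hP' hI hPC' hPC).symm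
  obtain ⟨rfl, rfl⟩ := eq_of_append_of_exists_gt (List.append_cancel_right h) hI hI' hPC hPC'
  exact ⟨rfl, rfl, rfl⟩

end Preorder

section LinearOrder

variable {α : Type*} [LinearOrder α] {J K L C : List α} {a b n M : α}

theorem exists_concat_lt (hA : AvoidsAll prefixBasis (J ++ C)) (hnd : (J ++ C).Nodup)
    (hC : SkewIndecomposable C) (hb : b ∈ J) (hbC : ∃ m ∈ C, b < m) :
    ∃ L e, C = L ++ [e] ∧ b < e := by
  obtain ⟨X, e, Y, rfl, hbe, hY⟩ := exists_eq_append_cons_of_exists_mem hbC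
  suffices Y = [] by exact ⟨X, e, by rw [this], hbe⟩
  by_contra hY₀
  obtain ⟨x, hx, y, hy, hyx⟩ : ∃ x ∈ X ++ [e], ∃ y ∈ Y, x ≤ y := by
    by_contra! h
    simpa [hY₀] using hC.2 (X ++ [e]) Y (by simp) h
  have hyb : y < b := lt_of_le_of_ne (not_lt.1 (hY y hy)) (by grind)
  have hxX : x ∈ X := by grind
  have hxy : x < y := lt_of_le_of_ne hyx (by grind)
  have hs : [b, x, e, y] <+ J ++ (X ++ e :: Y) :=
    (List.singleton_sublist.2 hb).append
      ((List.singleton_sublist.2 hxX).append ((List.singleton_sublist.2 hy).cons_cons e))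
  exact hA.not_peak_after_valley hnd hs (hxy.trans hyb) hxy hbe (hyb.trans hbe)

theorem lt_of_pair_sublist_of_lt_max (hA : AvoidsAll prefixBasis (K ++ n :: C))
    (hnd : (K ++ n :: C).Nodup) (hn : ∀ x ∈ K ++ C, x < n) (hM : M ∈ C) (hab : [a, b] <+ K)
    (hbM : b < M) : a < b := by
  by_contra hba
  have hne : a ≠ b := by simpa using (hnd.sublist (hab.trans (by simp)))
  have hs : [a, b, n, M] <+ K ++ n :: C :=
    hab.append ((List.singleton_sublist.2 hM).cons_cons n)
  exact hA.not_peak_after_valley hnd hs (by order) hbM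
    (hn a (by simp [fst_mem_of_pair_sublist hab])) (hn M (by simp [hM]))

theorem nonInterleaving_of_avoidsAll_max (hA : AvoidsAll prefixBasis (K ++ n :: C))
    (hnd : (K ++ n :: C).Nodup) (hn : ∀ x ∈ C, x < n) (hK : K.Pairwise (· < ·))
    (hC : SkewIndecomposable C) (hgt : ∀ a ∈ K, ∃ m ∈ C, a < m) : NonInterleaving K C := by
  intro a ha b hb c d hcd hca had hdb
  have hKC : K ++ C <+ K ++ n :: C := by simp
  obtain ⟨L, e, rfl, hbe⟩ :=
    exists_concat_lt (hA.sublist hKC) (hnd.sublist hKC) hC hb (hgt b hb)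
  have hcde : [c, d] <+ L := by
    rcases pair_sublist_append_iff.1 hcd with hcd | ⟨-, hd⟩ | hcd
    · exact hcd
    · exact absurd (hbe.trans_eq (List.mem_singleton.1 hd).symm) hdb.asymm
    · simpa using hcd.length_le
  have hab : [a, b] <+ K := pair_sublist_of_pairwise_lt hK ha hb (had.trans hdb)
  have hs : [a, b, n, c, d, e] <+ K ++ n :: (L ++ [e]) :=
    hab.append ((hcde.append_right [e]).cons_cons n)
  have hen : e < n := hn e (by simp)
  exact hA [1, 3, 5, 0, 2, 4] (by simp [prefixBasis])
    (occurs_of_map_getD (v := [c, a, d, b, e, n]) (a := a) (by simp; grind) (by simp) hs)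

theorem exists_eq_append_max_append_component (hC : C ≠ []) (hnd : C.Nodup)
    (hmax : ¬ EndsWithMax C) :
    ∃ S n R C', C = S ++ n :: (R ++ C') ∧ (∀ x ∈ S ++ (R ++ C'), x < n) ∧ Above R C' ∧
      SkewIndecomposable C' := by
  obtain ⟨n, hn, hle⟩ := C.toFinset.exists_max_image id (by simpa using hC)
  obtain ⟨S, R, rfl⟩ := List.append_of_mem (List.mem_toFinset.1 hn)
  have hlt : ∀ x ∈ S ++ R, x < n := fun x hx =>
    lt_of_le_of_ne (hle x (by simp at hx ⊢; tauto)) (by grind)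
  have hR : R ≠ [] := by
    rintro rfl
    exact hmax ⟨S, n, rfl, by simpa using hlt⟩
  obtain ⟨R, C', rfl, hRC, hC'⟩ := exists_eq_append_skewIndecomposable R hR
  exact ⟨S, n, R, C', rfl, hlt, hRC, hC'⟩

theorem exists_eq_append_of_lt_max (hA : AvoidsAll prefixBasis (J ++ L ++ n :: C))
    (hnd : (J ++ L ++ n :: C).Nodup) (hn : ∀ x ∈ J ++ L ++ C, x < n) (hM : M ∈ C) :
    ∃ I P, L = I ++ P ∧ (∀ x ∈ I, x < M) ∧ (∀ x ∈ P, M < x) ∧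
      (I ≠ [] → (∀ x ∈ J ++ I, x < M) ∧ (J ++ I).Pairwise (· < ·)) := by
  have hlt : ∀ a b, [a, b] <+ J ++ L → b < M → a < b :=
    fun a b => lt_of_pair_sublist_of_lt_max hA hnd hn hM
  obtain ⟨I, P, rfl, hIM, hMP⟩ := exists_eq_append_of_pair_imp (L := L) (q := (M ≤ ·))
    fun c d hcd hMc => not_lt.1 fun hdM => by
      have := hlt c d (hcd.trans (by simp)) hdM
      order
  simp only [not_le] at hIM
  refine ⟨I, P, rfl, hIM, fun x hx => lt_of_le_of_ne (hMP x hx) ?_, fun hI =>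
    forall_lt_and_pairwise_of_pair_lt hI hIM fun a b hab => hlt a b (hab.trans (by simp))⟩
  rintro rfl
  exact (List.nodup_append.1 hnd).2.2 M (by simp [hx]) M (by simp [hM]) rfl

theorem PrefixedComponent.exists_eq_insert_block (h : PrefixedComponent J C)
    (hnd : (J ++ C).Nodup) (hmax : ¬ EndsWithMax C) :
    ∃ I P C', C = I ++ P ++ C' ∧ I ≠ [] ∧ P ≠ [] ∧ Above P (J ++ I ++ C') ∧
      PrefixedComponent (J ++ I) C' ∧ AvoidsAll prefixBasis P := by
  obtain ⟨⟨-, hA, -⟩, hC, hgt⟩ := h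
  obtain ⟨S, n, R, C', rfl, hn, hRC, hC'⟩ :=
    exists_eq_append_max_append_component hC.1 (hnd.sublist (by simp)) hmax
  obtain ⟨M, hM, hle⟩ := C'.toFinset.exists_max_image id (by simpa using hC'.1)
  simp only [List.mem_toFinset, id] at hM hle
  have hJn : ∀ x ∈ J, x < n := fun x hx => by
    obtain ⟨m, hm, hxm⟩ := hgt x hx
    grind
  have hsub : J ++ S ++ n :: C' <+ J ++ (S ++ n :: (R ++ C')) := by simp
  obtain ⟨I, Q, rfl, hIM, hMQ, hJI⟩ :=
    exists_eq_append_of_lt_max (hA.sublist hsub) (hnd.sublist hsub) (by grind) hM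
  have hMP : ∀ x ∈ Q ++ n :: R, M < x :=
    List.forall_mem_append.2 ⟨hMQ, List.forall_mem_cons.2
      ⟨hn M (by simp [hM]), fun x hx => hRC x hx M hM⟩⟩
  have hI : I ≠ [] := by
    rintro rfl
    have := hC.2 (Q ++ n :: R) C' (by simp) fun x hx y hy => (hle y hy).trans_lt (hMP x hx)
    simp [hC'.1] at this
  obtain ⟨hJIM, hsorted⟩ := hJI hI
  have hgt' : ∀ a ∈ J ++ I, ∃ m ∈ C', a < m := fun a ha => ⟨M, hM, hJIM a ha⟩
  have hsub' : J ++ I ++ n :: C' <+ J ++ (I ++ Q ++ n :: (R ++ C')) := by simp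
  have hA' : AvoidsAll prefixBasis (J ++ I ++ C') :=
    hA.sublist (.trans (show _ <+ J ++ I ++ n :: C' by simp) hsub')
  have hint : NonInterleaving (J ++ I) C' := nonInterleaving_of_avoidsAll_max
    (hA.sublist hsub') (hnd.sublist hsub') (by grind) hsorted hC' hgt'
  refine ⟨I, Q ++ n :: R, C', by simp, hI, by simp, fun x hx => ?_,
    ⟨⟨hsorted, hA', hint⟩, hC', hgt'⟩, hA.sublist (List.IsInfix.sublist ⟨J ++ I, C', by simp⟩)⟩
  exact List.forall_mem_append.2 ⟨fun y hy => (hJIM y hy).trans (hMP x hx),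
    fun y hy => (hle y hy).trans_lt (hMP x hx)⟩

end LinearOrder

end PrefixedWord

section PrefixedWord

variable {α : Type*} [Preorder α] {J L C X Y B₀ B₁ : List α} {a : α}

theorem prefixedWord_append_iff_left (h : Above (J ++ X) Y) :
    PrefixedWord J (X ++ Y) ↔ PrefixedWord J X ∧ AvoidsAll prefixBasis Y := by
  have hint := nonInterleaving_append_iff_left (X := X) (above_append_left.1 h).1
  refine ⟨fun ⟨hJ, hA, hJL⟩ => ⟨⟨hJ, hA.sublist (by simp), hint.1 hJL⟩, hA.sublist (by simp)⟩,
    fun ⟨⟨hJ, hA, hJX⟩, hY⟩ => ⟨hJ, ?_, hint.2 hJX⟩⟩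
  simpa using hA.append_of_above skewIndecomposable_of_mem_prefixBasis h hY

theorem prefixedWord_append_iff_right (h : Above X (J ++ Y)) :
    PrefixedWord J (X ++ Y) ↔ AvoidsAll prefixBasis X ∧ PrefixedWord J Y := by
  have hint := nonInterleaving_append_iff_right (Y := Y) (above_append_right.1 h).1
  refine ⟨fun ⟨hJ, hA, hJL⟩ => ⟨hA.sublist ?_, hJ, hA.sublist (by simp), hint.1 hJL⟩,
    fun ⟨hX, hJ, hA, hJY⟩ => ⟨hJ, ?_, hint.2 hJY⟩⟩
  · exact List.IsInfix.sublist ⟨J, Y, by simp⟩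
  · simpa using hA.insert_block hJ hJY hX h

theorem prefixedWord_cons_iff (h : ∀ x ∈ J ++ L, a < x) :
    PrefixedWord (a :: J) L ↔ PrefixedWord J L := by
  obtain ⟨hJ, hL⟩ := List.forall_mem_append.1 h
  exact ⟨fun ⟨h₁, h₂, h₃⟩ => ⟨h₁.of_cons, h₂.sublist (by simp), (nonInterleaving_cons_iff hL).1 h₃⟩,
    fun ⟨h₁, h₂, h₃⟩ => ⟨h₁.cons hJ, h₂.cons_min h, (nonInterleaving_cons_iff hL).2 h₃⟩⟩

theorem prefixedComponent_cons_iff (h : ∀ x ∈ J ++ C, a < x) :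
    PrefixedComponent (a :: J) C ↔ PrefixedComponent J C := by
  refine ⟨fun ⟨h₁, h₂, h₃⟩ => ⟨(prefixedWord_cons_iff h).1 h₁, h₂, fun b hb => h₃ b (by simp [hb])⟩,
    fun ⟨h₁, h₂, h₃⟩ => ⟨(prefixedWord_cons_iff h).2 h₁, h₂, List.forall_mem_cons.2 ⟨?_, h₃⟩⟩⟩
  obtain ⟨m, hm⟩ := List.exists_mem_of_ne_nil C h₂.1
  exact ⟨m, hm, h m (by simp [hm])⟩

theorem not_straddles_append (hX : ∀ x ∈ X, a < x) (hY : ∀ y ∈ Y, y < a) :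
    ¬ Straddles (X ++ Y) a := by
  rintro ⟨c, d, hcd, hca, had⟩
  have hcX : c ∉ X := fun hc => hca.asymm (hX c hc)
  have hdY : d ∉ Y := fun hd => had.asymm (hY d hd)
  rcases pair_sublist_append_iff.1 hcd with hcd | ⟨hc, -⟩ | hcd
  · exact hcX (fst_mem_of_pair_sublist hcd)
  · exact hcX hc
  · exact hdY (snd_mem_of_pair_sublist hcd)

theorem eq_of_append_of_forall_lt {X' Y' : List α} (h : X ++ Y = X' ++ Y')
    (hX : ∀ x ∈ X, a < x) (hY : ∀ y ∈ Y, y < a) (hX' : ∀ x ∈ X', a < x)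
    (hY' : ∀ y ∈ Y', y < a) : X = X' ∧ Y = Y' := by
  rcases List.append_eq_append_iff.1 h with ⟨_ | ⟨z, Z⟩, rfl, rfl⟩ | ⟨_ | ⟨z, Z⟩, rfl, rfl⟩
  · simp
  · exact absurd (hY z (by simp)) (hX' z (by simp)).asymm
  · simp
  · exact absurd (hY' z (by simp)) (hX z (by simp)).asymm

theorem eq_of_append_component_of_suffix {B₀' C' B₁' : List α}
    (h : B₀ ++ C ++ B₁ = B₀' ++ C' ++ B₁') (hsuf : B₁ <:+ B₁') (hC : SkewIndecomposable C)
    (hm : ∃ m ∈ C, a < m) (h₁' : Above (B₀' ++ C') B₁') (ha' : ∀ y ∈ B₁', y < a) :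
    B₁ = B₁' := by
  obtain ⟨Z, rfl⟩ := hsuf
  obtain ⟨m, hm, ham⟩ := hm
  have hmZ : m ∉ Z := fun hmZ => ham.asymm (ha' m (by simp [hmZ]))
  have hBC : B₀ ++ C = B₀' ++ C' ++ Z := List.append_cancel_right (by simpa using h)
  rcases List.append_eq_append_iff.1 hBC with ⟨W, hW, rfl⟩ | ⟨W, -, rfl⟩
  · have hWZ : Above W Z := fun w hw z hz => h₁' w (by simp [hW, hw]) z (by simp [hz])
    rcases hC.2 W Z rfl hWZ with rfl | rfl
    · simp [hmZ] at hm
    · simp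
  · simp [hm] at hmZ

theorem eq_of_append_component {B₀' C' B₁' : List α}
    (h : B₀ ++ C ++ B₁ = B₀' ++ C' ++ B₁') (hC : SkewIndecomposable C)
    (hC' : SkewIndecomposable C') (h₀ : Above B₀ C) (h₀' : Above B₀' C')
    (h₁ : Above (B₀ ++ C) B₁) (h₁' : Above (B₀' ++ C') B₁') (ha : ∀ y ∈ B₁, y < a)
    (ha' : ∀ y ∈ B₁', y < a) (hm : ∃ m ∈ C, a < m) (hm' : ∃ m ∈ C', a < m) :
    B₀ = B₀' ∧ C = C' ∧ B₁ = B₁' := by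
  obtain rfl : B₁ = B₁' := by
    rcases List.append_eq_append_iff.1 h with ⟨Z, -, hZ⟩ | ⟨Z, -, hZ⟩
    · exact (eq_of_append_component_of_suffix h.symm ⟨Z, hZ.symm⟩ hC' hm' h₁ ha).symm
    · exact eq_of_append_component_of_suffix h ⟨Z, hZ.symm⟩ hC hm h₁' ha'
  obtain ⟨rfl, rfl⟩ := eq_of_append_skewIndecomposable (List.append_cancel_right h) h₀ h₀' hC hC'
  exact ⟨rfl, rfl, rfl⟩

theorem PrefixedWord.exists_component {α : Type*} [LinearOrder α] {J L : List α} {a : α}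
    (h : PrefixedWord (a :: J) L) (hnd : (a :: J ++ L).Nodup) (hs : Straddles L a) :
    ∃ B₀ C B₁, L = B₀ ++ C ++ B₁ ∧ PrefixedComponent (a :: J) C ∧ (∃ c ∈ C, c < a) ∧
      AvoidsAll prefixBasis B₀ ∧ AvoidsAll prefixBasis B₁ ∧
      Above B₀ (a :: J ++ C) ∧ Above (B₀ ++ (a :: J ++ C)) B₁ := by
  obtain ⟨c, d, hcd, hca, had⟩ := hs
  obtain ⟨B₀, C, B₁, rfl, h₀, h₁, hC, hc, hd⟩ :=
    exists_component_of_pair_sublist L hcd (hca.trans had)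
  have hJ : ∀ b ∈ a :: J, c < b := List.forall_mem_cons.2
    ⟨hca, fun b hb => hca.trans (List.rel_of_pairwise_cons h.sorted hb)⟩
  have hJd : ∀ b ∈ a :: J, b < d := fun b hb =>
    lt_of_le_of_ne (not_lt.1 (h.nonInterleaving a (by simp) b hb c d hcd hca had))
      ((List.nodup_append.1 hnd).2.2 b hb d (by simp [hd]))
  have h₀' : Above B₀ (a :: J ++ C) :=
    above_append_right.2 ⟨fun x hx b hb => (hJd b hb).trans (h₀ x hx d hd), h₀⟩
  have h₁' : Above (B₀ ++ (a :: J ++ C)) B₁ := by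
    have hJ₁ : Above (a :: J) B₁ := fun b hb y hy => (h₁ c (by simp [hc]) y hy).trans (hJ b hb)
    simp only [above_append_left] at h₁ ⊢
    exact ⟨h₁.1, hJ₁, h₁.2⟩
  have h₁'' : Above (a :: J ++ (B₀ ++ C)) B₁ := by
    simp only [above_append_left] at h₁' ⊢
    tauto
  obtain ⟨hBC, hB₁⟩ := (prefixedWord_append_iff_left h₁'').1 h
  obtain ⟨hB₀, hJC⟩ := (prefixedWord_append_iff_right h₀').1 hBC
  exact ⟨B₀, C, B₁, rfl, ⟨hJC, hC, fun b hb => ⟨d, hd, hJd b hb⟩⟩, ⟨c, hc, hca⟩, hB₀, hB₁,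
    h₀', h₁'⟩

end PrefixedWord

section Map

variable {α β : Type*} [Preorder α] [LinearOrder β] {g : β → α} {J L C X Y : List β}

theorem above_map_iff (hg : StrictMono g) : Above (X.map g) (Y.map g) ↔ Above X Y := by
  simp [Above, hg.lt_iff_lt]

theorem skewIndecomposable_map_iff (hg : StrictMono g) :
    SkewIndecomposable (L.map g) ↔ SkewIndecomposable L := by
  refine and_congr (by simp) ⟨fun h X Y hXY hab => ?_, fun h X Y hXY hab => ?_⟩
  · simpa using h (X.map g) (Y.map g) (by simp [hXY]) ((above_map_iff hg).2 hab)
  · obtain ⟨X, Y, rfl, rfl, rfl⟩ := List.map_eq_append_iff.1 hXY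
    simpa using h X Y rfl ((above_map_iff hg).1 hab)

theorem nonInterleaving_map_iff (hg : StrictMono g) :
    NonInterleaving (J.map g) (L.map g) ↔ NonInterleaving J L := by
  refine ⟨fun h a ha b hb c d hcd => ?_, fun h a ha b hb c d hcd => ?_⟩
  · simpa only [hg.lt_iff_lt] using
      h (g a) (List.mem_map_of_mem ha) (g b) (List.mem_map_of_mem hb) (g c) (g d) (hcd.map g)
  · obtain ⟨a', ha', rfl⟩ := List.mem_map.1 ha
    obtain ⟨b', hb', rfl⟩ := List.mem_map.1 hb
    obtain ⟨l, hl, hcd⟩ := List.sublist_map_iff.1 hcd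
    obtain ⟨c, l, rfl, rfl, hd⟩ := List.map_eq_cons_iff.1 hcd.symm
    obtain ⟨d, rfl, rfl⟩ := List.map_eq_singleton_iff.1 hd
    simpa only [hg.lt_iff_lt] using h a' ha' b' hb' c d hl

theorem prefixedWord_map_iff [Nonempty β] (hg : StrictMono g) :
    PrefixedWord (J.map g) (L.map g) ↔ PrefixedWord J L := by
  have hsorted : (J.map g).Pairwise (· < ·) ↔ J.Pairwise (· < ·) := by
    simp only [List.pairwise_map, hg.lt_iff_lt]
  constructor <;> rintro ⟨h₁, h₂, h₃⟩ <;> refine ⟨?_, ?_, ?_⟩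
  · exact hsorted.1 h₁
  · rwa [← List.map_append, avoidsAll_map_iff hg] at h₂
  · exact (nonInterleaving_map_iff hg).1 h₃
  · exact hsorted.2 h₁
  · rwa [← List.map_append, avoidsAll_map_iff hg]
  · exact (nonInterleaving_map_iff hg).2 h₃

theorem prefixedComponent_map_iff [Nonempty β] (hg : StrictMono g) :
    PrefixedComponent (J.map g) (C.map g) ↔ PrefixedComponent J C := by
  have hgt : (∀ a ∈ J.map g, ∃ m ∈ C.map g, a < m) ↔ ∀ a ∈ J, ∃ m ∈ C, a < m := by
    simp [hg.lt_iff_lt]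
  exact ⟨fun ⟨h₁, h₂, h₃⟩ => ⟨(prefixedWord_map_iff hg).1 h₁,
      (skewIndecomposable_map_iff hg).1 h₂, hgt.1 h₃⟩,
    fun ⟨h₁, h₂, h₃⟩ => ⟨(prefixedWord_map_iff hg).2 h₁,
      (skewIndecomposable_map_iff hg).2 h₂, hgt.2 h₃⟩⟩

end Map

section Separable

section Preorder

variable {α : Type*} [Preorder α] {l : List α}

theorem skewIndecomposable_or_reverse (hl : l ≠ []) :
    SkewIndecomposable l ∨ SkewIndecomposable l.reverse := by
  by_contra! h
  obtain ⟨X, Y, rfl, hX, hY, hab⟩ := exists_above_of_not_skewIndecomposable hl h.1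
  obtain ⟨Y', X', hXY, hY', hX', hab'⟩ :=
    exists_above_of_not_skewIndecomposable (List.reverse_ne_nil_iff.2 hl) h.2
  obtain ⟨x, hx⟩ := List.exists_mem_of_ne_nil X hX
  obtain ⟨y, hy⟩ := List.exists_mem_of_ne_nil Y hY
  obtain ⟨x', hx'⟩ := List.exists_mem_of_ne_nil X' hX'
  obtain ⟨y', hy'⟩ := List.exists_mem_of_ne_nil Y' hY'
  rw [List.reverse_append] at hXY
  rcases List.append_eq_append_iff.1 hXY with ⟨Z, rfl, h⟩ | ⟨Z, h, rfl⟩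
  · have hx'X : x' ∈ X := List.mem_reverse.1 (by simp [h, hx'])
    exact (hab x' hx'X y hy).asymm (hab' y (by simp [hy]) x' hx')
  · have hy'Y : y' ∈ Y := List.mem_reverse.1 (by simp [h, hy'])
    exact (hab x hx y' hy'Y).asymm (hab' y' hy' x (by simp [hx]))

theorem skewIndecomposable_map_toDual_iff :
    SkewIndecomposable (l.map OrderDual.toDual) ↔ SkewIndecomposable l.reverse := by
  refine and_congr (by simp) ⟨fun h X Y hXY hab => ?_, fun h X Y hXY hab => ?_⟩
  · have hl : l = Y.reverse ++ X.reverse := by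
      rw [← List.reverse_append, ← hXY, List.reverse_reverse]
    have hYX : Above (Y.reverse.map OrderDual.toDual) (X.reverse.map OrderDual.toDual) := by
      simpa [Above] using fun y hy x hx => hab x hx y hy
    simpa [or_comm] using h _ _ (by simp [hl]) hYX
  · obtain ⟨X, Y, rfl, rfl, rfl⟩ := List.map_eq_append_iff.1 hXY
    have hYX : Above Y.reverse X.reverse := by
      simpa [Above] using fun y hy x hx => hab (OrderDual.toDual x) (List.mem_map_of_mem hx)
        (OrderDual.toDual y) (List.mem_map_of_mem hy)
    simpa [or_comm] using h Y.reverse X.reverse (by simp) hYX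

end Preorder

section LinearOrder

variable {α : Type*} [LinearOrder α] {l : List α} {v : α}

theorem SkewIndecomposable.forall_lt_of_cons (hv : v ∉ l) (hl : l ≠ [])
    (h : SkewIndecomposable (v :: l)) (hdec : ¬ SkewIndecomposable l)
    (havoid : ∀ a b c d, [a, b, c, d] <+ v :: l → c < a → a < d → ¬ d < b) :
    ∀ z ∈ l, v < z := by
  obtain ⟨X, Y, rfl, hX, hY, hab⟩ := exists_above_of_not_skewIndecomposable hl hdec
  obtain ⟨x, hx⟩ := List.exists_mem_of_ne_nil X hX
  have hdown : ¬ Straddles Y v := fun ⟨c, d, hcd, hcv, hvd⟩ =>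
    havoid v x c d (((List.singleton_sublist.2 hx).append hcd).cons_cons v) hcv hvd
      (hab x hx d (snd_mem_of_pair_sublist hcd))
  obtain ⟨Y₁, Y₂, rfl, h₁, h₂⟩ :=
    exists_eq_append_of_not_straddles (fun hvY => hv (List.mem_append_right X hvY)) hdown
  obtain rfl : Y₂ = [] := by
    refine (h.2 (v :: X ++ Y₁) Y₂ (by simp) fun z hz y hy => ?_).resolve_left (by simp)
    rcases List.mem_append.1 hz with hz | hz
    · rcases List.mem_cons.1 hz with rfl | hz
      · exact h₂ y hy
      · exact hab z hz y (by simp [hy])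
    · exact (h₂ y hy).trans (h₁ z hz)
  rw [List.append_nil] at hab hY ⊢
  obtain ⟨y, hy⟩ := List.exists_mem_of_ne_nil Y₁ hY
  exact List.forall_mem_append.2 ⟨fun z hz => (h₁ y hy).trans (hab z hz y hy), h₁⟩

theorem AvoidsAll.length_eq_one (h : AvoidsAll separableBasis l) (hnd : l.Nodup)
    (hl : SkewIndecomposable l) (hr : SkewIndecomposable l.reverse) : l.length = 1 := by
  induction l with
  | nil => exact absurd rfl hl.1
  | cons v l ih =>
    by_contra hlen
    have hl₀ : l ≠ [] := by
      rintro rfl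
      exact hlen rfl
    obtain ⟨hv, hnd'⟩ := List.nodup_cons.1 hnd
    have h2413 : ∀ a b c d, [a, b, c, d] <+ v :: l → c < a → a < d → ¬ d < b :=
      fun a b c d hs hca had hdb => h [1, 3, 0, 2] (by simp [separableBasis])
        (occurs_of_map_getD (v := [c, a, d, b]) (a := a) (by simp; grind) (by simp) hs)
    have h3142 : ∀ a b c d, [a, b, c, d] <+ v :: l → a < c → d < a → ¬ b < d :=
      fun a b c d hs hac hda hbd => h [2, 0, 3, 1] (by simp [separableBasis])
        (occurs_of_map_getD (v := [b, d, a, c]) (a := a) (by simp; grind) (by simp) hs)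
    have hnot_lt : ¬ ∀ z ∈ l, v < z := fun hlt => by
      simpa [hl₀] using hr.2 l.reverse [v] (by simp) (by simpa [Above] using hlt)
    have hnot_gt : ¬ ∀ z ∈ l, z < v := fun hgt => by
      simpa [hl₀] using hl.2 [v] l (by simp) (by simpa [Above] using hgt)
    have hl' : SkewIndecomposable l := by
      by_contra hdec
      exact hnot_lt (hl.forall_lt_of_cons hv hl₀ hdec h2413)
    have hr' : SkewIndecomposable l.reverse := by
      by_contra hdec
      refine hnot_gt fun z hz => OrderDual.toDual_lt_toDual.1 <|
        (skewIndecomposable_map_toDual_iff.2 hr).forall_lt_of_cons (by simpa using hv)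
          (by simpa using hl₀) (mt skewIndecomposable_map_toDual_iff.1 hdec)
          (fun a b c d hs => ?_) _ (List.mem_map_of_mem hz)
      exact h3142 a.ofDual b.ofDual c.ofDual d.ofDual (by simpa using hs.map OrderDual.ofDual)
    obtain ⟨w, rfl⟩ := List.length_eq_one_iff.1 (ih (h.sublist (by simp)) hnd' hl' hr')
    rcases lt_or_gt_of_ne (show v ≠ w by simpa using hv) with hlt | hgt
    · exact hnot_lt (by simpa using hlt)
    · exact hnot_gt (by simpa using hgt)

end LinearOrder

end Separable

section GeneratingFunction

/-- Only finitely many elements of `S` have any given size. -/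
def FiniteFibers {α : Type*} (size : α → ℕ) (S : Set α) : Prop :=
  ∀ n, {x ∈ S | size x = n}.Finite

/-- The ordinary generating function of `S`: its `n`-th coefficient is the number of elements
of `S` of size `n` (or 0 if there are infinitely many). -/
noncomputable def genFun {α : Type*} (size : α → ℕ) (S : Set α) : ℤ⟦X⟧ :=
  PowerSeries.mk fun n => ({x ∈ S | size x = n}.ncard : ℤ)

variable {α β : Type*} {size : α → ℕ} {size' : β → ℕ} {S : Set α} {T : Set β} {a : α}

theorem FiniteFibers.subset {S' : Set α} (h : FiniteFibers size S) (hS : S' ⊆ S) :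
    FiniteFibers size S' :=
  fun n => (h n).subset fun _ hx => ⟨hS hx.1, hx.2⟩

theorem FiniteFibers.prod (hS : FiniteFibers size S) (hT : FiniteFibers size' T) :
    FiniteFibers (fun p : α × β => size p.1 + size' p.2) (S ×ˢ T) := by
  refine fun n => (((Set.finite_Iic n).biUnion fun i _ => hS i).prod
    ((Set.finite_Iic n).biUnion fun i _ => hT i)).subset ?_
  rintro ⟨x, y⟩ ⟨⟨hx, hy⟩, hn⟩
  dsimp only at hx hy hn
  simp only [Set.mem_prod, Set.mem_iUnion, Set.mem_ofPred_eq, Set.mem_Iic]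
  exact ⟨⟨_, by omega, hx, rfl⟩, ⟨_, by omega, hy, rfl⟩⟩

theorem genFun_congr {f : α → ℕ} (h : ∀ x ∈ S, size x = f x) : genFun size S = genFun f S := by
  have hset : ∀ n, {x ∈ S | size x = n} = {x ∈ S | f x = n} := fun n =>
    Set.ext fun x => and_congr_right fun hx => by rw [h x hx]
  simp only [genFun, hset]

theorem genFun_eq_of_bijOn {f : α → β} (hf : Set.BijOn f S T)
    (h : ∀ x ∈ S, size' (f x) = size x) : genFun size S = genFun size' T := by
  refine PowerSeries.ext fun n => ?_
  have himage : f '' {x ∈ S | size x = n} = {y ∈ T | size' y = n} := by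
    ext y
    constructor
    · rintro ⟨x, ⟨hx, hn⟩, rfl⟩
      exact ⟨hf.mapsTo hx, (h x hx).trans hn⟩
    · rintro ⟨hy, hn⟩
      obtain ⟨x, hx, rfl⟩ := hf.surjOn hy
      exact ⟨x, ⟨hx, (h x hx).symm.trans hn⟩, rfl⟩
  simp only [genFun, PowerSeries.coeff_mk, ← himage]
  rw [(hf.injOn.mono (Set.sep_subset S _)).ncard_image]

theorem genFun_eq_add (hS : FiniteFibers size S) (q : α → Prop) :
    genFun size S = genFun size {x ∈ S | q x} + genFun size {x ∈ S | ¬ q x} := by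
  refine PowerSeries.ext fun n => ?_
  have hunion : {x ∈ S | size x = n} =
      {x ∈ {x ∈ S | q x} | size x = n} ∪ {x ∈ {x ∈ S | ¬ q x} | size x = n} := by
    ext x
    simp only [Set.mem_union, Set.mem_ofPred_eq]
    tauto
  simp only [genFun, map_add, PowerSeries.coeff_mk]
  rw [hunion, Set.ncard_union_eq ?_ (hS.subset (Set.sep_subset S _) n)
    (hS.subset (Set.sep_subset S _) n), Nat.cast_add]
  exact Set.disjoint_left.2 fun x hx hx' => hx'.1.2 hx.1.2

theorem genFun_union_add_inter {S' : Set α} (hS : FiniteFibers size S)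
    (hS' : FiniteFibers size S') :
    genFun size (S ∪ S') + genFun size (S ∩ S') = genFun size S + genFun size S' := by
  refine PowerSeries.ext fun n => ?_
  have := Set.ncard_union_add_ncard_inter _ _ (hS n) (hS' n)
  simp only [genFun, map_add, PowerSeries.coeff_mk]
  convert congrArg (Nat.cast : ℕ → ℤ) this using 1
  · rw [Nat.cast_add]
    congr 3 <;> ext x <;> grind
  · rw [Nat.cast_add]

theorem genFun_singleton : genFun size {a} = PowerSeries.X ^ size a := by
  refine PowerSeries.ext fun n => ?_
  rw [genFun, PowerSeries.coeff_mk, PowerSeries.coeff_X_pow]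
  split_ifs with h
  · rw [show {x ∈ ({a} : Set α) | size x = n} = {a} by ext x; grind]
    simp
  · rw [show {x ∈ ({a} : Set α) | size x = n} = ∅ by ext x; grind]
    simp

theorem genFun_prod (hS : FiniteFibers size S) (hT : FiniteFibers size' T) :
    genFun (fun p : α × β => size p.1 + size' p.2) (S ×ˢ T) = genFun size S * genFun size' T := by
  classical
  refine PowerSeries.ext fun n => ?_
  let A := (hS.prod hT n).toFinset
  have hA : ∀ p ∈ A, (size p.1, size' p.2) ∈ Finset.HasAntidiagonal.antidiagonal n := fun p hp => by
    simpa [A] using (show p ∈ _ from (Set.Finite.mem_toFinset _).1 hp).2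
  have hfiber : ∀ ij ∈ Finset.HasAntidiagonal.antidiagonal n,
      ({p ∈ A | (size p.1, size' p.2) = ij}.card : ℤ) =
        {x ∈ S | size x = ij.1}.ncard * {y ∈ T | size' y = ij.2}.ncard := by
    rintro ⟨i, j⟩ hij
    rw [← Nat.cast_mul, ← Set.ncard_prod, ← Set.ncard_coe_finset]
    congr 2
    ext ⟨x, y⟩
    simp only [Finset.HasAntidiagonal.mem_antidiagonal, Prod.mk.injEq, Set.mem_prod,
      Finset.coe_filter, Set.Finite.mem_toFinset, Set.mem_ofPred_eq, A] at hij ⊢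
    grind
  simp only [genFun, PowerSeries.coeff_mul, PowerSeries.coeff_mk]
  rw [Set.ncard_eq_toFinset_card _ (hS.prod hT n), Finset.card_eq_sum_card_fiberwise hA,
    Nat.cast_sum]
  exact Finset.sum_congr rfl hfiber

theorem genFun_add_one : genFun (fun x => size x + 1) S = PowerSeries.X * genFun size S := by
  refine PowerSeries.ext fun n => ?_
  cases n <;> simp [genFun, PowerSeries.coeff_succ_X_mul, PowerSeries.coeff_zero_X_mul]

end GeneratingFunction

section PermWord

/-- The one-line notations of permutations, with letters counted from 0. -/
def IsPermWord (l : List ℕ) : Prop :=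
  l.Nodup ∧ ∀ x ∈ l, x < l.length

/-- The skew sum of `X` and `Y`: the word `X`, shifted upwards so as to lie above the
letters `0, …, Y.length - 1`, followed by `Y`. -/
def skewSum (X Y : List ℕ) : List ℕ :=
  X.map (· + Y.length) ++ Y

variable {X Y l l' : List ℕ} {M : ℕ}

theorem strictMono_add_right (s : ℕ) : StrictMono (· + s) :=
  fun _ _ h => Nat.add_lt_add_right h s

theorem map_add_right_injective (s : ℕ) : Function.Injective (List.map (· + s)) :=
  List.map_injective_iff.2 (add_left_injective s)

theorem IsPermWord.perm_range (h : IsPermWord l) : l ~ List.range l.length :=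
  (List.subperm_of_subset h.1 fun x hx => List.mem_range.2 (h.2 x hx)).perm_of_length_le (by simp)

theorem isPermWord_congr (h : l ~ l') : IsPermWord l ↔ IsPermWord l' := by
  simp only [IsPermWord, h.nodup_iff, h.mem_iff, h.length_eq]

theorem isPermWord_skewSum_iff : IsPermWord (skewSum X Y) ↔ IsPermWord X ∧ IsPermWord Y := by
  have hnd : (X.map (· + Y.length)).Nodup ↔ X.Nodup :=
    List.nodup_map_iff (add_left_injective _)
  constructor
  · rintro ⟨h₁, h₂⟩
    obtain ⟨hX, hY, hXY⟩ := List.nodup_append.1 h₁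
    simp only [skewSum, List.length_append, List.length_map, List.forall_mem_append,
      List.forall_mem_map] at h₂
    have hX' : IsPermWord X := ⟨hnd.1 hX, fun x hx => by simpa using h₂.1 x hx⟩
    refine ⟨hX', hY, fun y hy => ?_⟩
    by_contra! hle
    have hmem : y - Y.length ∈ X := hX'.perm_range.mem_iff.2 <| List.mem_range.2 <|
      (Nat.sub_lt_iff_lt_add hle).2 (by simpa [add_comm] using h₂.2 y hy)
    exact hXY y (List.mem_map.2 ⟨_, hmem, Nat.sub_add_cancel hle⟩) y hy rfl
  · rintro ⟨⟨hX, hX'⟩, hY, hY'⟩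
    refine ⟨List.nodup_append.2 ⟨hnd.2 hX, hY, ?_⟩, ?_⟩
    · rintro _ hx y hy rfl
      obtain ⟨x, -, hxy⟩ := List.mem_map.1 hx
      exact absurd (hY' _ hy) (by simp [← hxy])
    · simp only [skewSum, List.length_append, List.length_map, List.forall_mem_append,
        List.forall_mem_map]
      exact ⟨fun x hx => by simpa using hX' x hx, fun y hy => (hY' y hy).trans_le (by simp)⟩

theorem IsPermWord.above_map_add (hY : IsPermWord Y) (X : List ℕ) :
    Above (X.map (· + Y.length)) Y := by
  simpa [Above] using fun x _ y hy => Nat.lt_add_left x (hY.2 y hy)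

theorem exists_eq_map_add_of_above (h : IsPermWord (X ++ Y)) (hXY : Above X Y) :
    ∃ X' : List ℕ, X = X'.map (· + Y.length) ∧ IsPermWord X' ∧ IsPermWord Y := by
  suffices hX : ∃ X' : List ℕ, X = X'.map (· + Y.length) by
    obtain ⟨X', rfl⟩ := hX
    exact ⟨X', rfl, isPermWord_skewSum_iff.1 h⟩
  have hY : Y.Nodup := (List.nodup_append.1 h.1).2.1
  have hle : ∀ x ∈ X, Y.length ≤ x := fun x hx => by
    simpa using (List.subperm_of_subset hY fun y hy => List.mem_range.2 (hXY x hx y hy)).length_le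
  refine ⟨X.map (· - Y.length), ?_⟩
  rw [List.map_map]
  exact (List.map_id X).symm.trans
    (List.map_congr_left fun x hx => (Nat.sub_add_cancel (hle x hx)).symm)

theorem isPermWord_concat_iff (hM : ∀ x ∈ l, x < M) :
    IsPermWord (l ++ [M]) ↔ M = l.length ∧ IsPermWord l := by
  rw [isPermWord_congr (List.perm_append_comm (l₁ := l) (l₂ := [M]))]
  constructor
  · intro h
    obtain ⟨X, hX, hXp, hl⟩ := exists_eq_map_add_of_above h (by simpa [Above] using hM)
    obtain ⟨x, rfl, rfl⟩ := List.map_eq_singleton_iff.1 hX.symm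
    exact ⟨by simpa using hXp.2 x (by simp), hl⟩
  · rintro ⟨rfl, hl⟩
    simpa [skewSum] using isPermWord_skewSum_iff.2 ⟨show IsPermWord [0] by simp [IsPermWord], hl⟩

/-- The permutation words with the property `A`. -/
def permWords (A : List ℕ → Prop) : Set (List ℕ) :=
  {l | IsPermWord l ∧ A l}

/-- The pairs of words with the property `Q` whose concatenation is a permutation word. -/
def permPairs (Q : List ℕ → List ℕ → Prop) : Set (List ℕ × List ℕ) :=
  {p | IsPermWord (p.1 ++ p.2) ∧ Q p.1 p.2}

theorem finiteFibers_permWords (A : List ℕ → Prop) : FiniteFibers List.length (permWords A) := by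
  refine fun n => (List.finite_toSet (List.range n).permutations).subset ?_
  rintro l ⟨⟨hl, -⟩, rfl⟩
  simpa using hl.perm_range

theorem finiteFibers_permPairs (Q : List ℕ → List ℕ → Prop) :
    FiniteFibers (fun p => p.1.length + p.2.length) (permPairs Q) := by
  refine fun n => (((finiteFibers_permWords (fun _ => True) n).prod (Set.finite_Iic n)).image
    fun p => (p.1.take p.2, p.1.drop p.2)).subset ?_
  rintro ⟨J, L⟩ ⟨⟨hJL, -⟩, hn⟩
  dsimp only at hJL hn
  exact ⟨(J ++ L, J.length), ⟨⟨⟨hJL, trivial⟩, by simpa using hn⟩, by simp [← hn]⟩, by simp⟩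

end PermWord

section Components

variable {A : List ℕ → Prop} {B : List (List ℕ)}

/-- The generating function of the permutations avoiding the patterns in `B`. -/
noncomputable def wordSeries (B : List (List ℕ)) : ℤ⟦X⟧ :=
  genFun List.length (permWords (AvoidsAll B))

/-- The generating function of the skew indecomposable permutations avoiding the patterns
in `B`. -/
noncomputable def componentSeries (B : List (List ℕ)) : ℤ⟦X⟧ :=
  genFun List.length (permWords fun l => SkewIndecomposable l ∧ AvoidsAll B l)

theorem genFun_permWords_eq_one_add (h : A []) :
    genFun List.length (permWords A) =
      1 + genFun List.length (permWords fun l => l ≠ [] ∧ A l) := by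
  have hnil : {l ∈ permWords A | l = []} = {[]} := by
    ext l
    simp only [permWords, Set.mem_ofPred_eq, Set.mem_singleton_iff, and_iff_right_iff_imp]
    rintro rfl
    exact ⟨⟨by simp, by simp⟩, h⟩
  have hne : {l ∈ permWords A | l ≠ []} = permWords fun l => l ≠ [] ∧ A l := by
    ext l
    simp only [permWords, Set.mem_ofPred_eq]
    tauto
  rw [genFun_eq_add (finiteFibers_permWords A) (· = []), hnil, hne, genFun_singleton]
  simp

theorem bijOn_skewSum (hB : ∀ p ∈ B, SkewIndecomposable p) :
    Set.BijOn (fun p : List ℕ × List ℕ => skewSum p.1 p.2)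
      (permWords (AvoidsAll B) ×ˢ permWords fun l => SkewIndecomposable l ∧ AvoidsAll B l)
      (permWords fun l => l ≠ [] ∧ AvoidsAll B l) := by
  refine ⟨?_, ?_, ?_⟩
  · rintro ⟨X, C⟩ ⟨⟨hX, hXB⟩, hC, hCI, hCB⟩
    exact ⟨isPermWord_skewSum_iff.2 ⟨hX, hC⟩, by simp [skewSum, hCI.1],
      ((avoidsAll_map_iff (strictMono_add_right _)).2 hXB).append_of_above hB
        (hC.above_map_add X) hCB⟩
  · rintro ⟨X, C⟩ ⟨-, hC, hCI, -⟩ ⟨X', C'⟩ ⟨-, hC', hCI', -⟩ h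
    obtain ⟨hXX, rfl⟩ := eq_of_append_skewIndecomposable (show skewSum X C = skewSum X' C' from h)
      (hC.above_map_add X) (hC'.above_map_add X') hCI hCI'
    rw [map_add_right_injective _ hXX]
  · rintro l ⟨hl, hne, hlB⟩
    obtain ⟨X, C, rfl, hab, hCI⟩ := exists_eq_append_skewIndecomposable l hne
    obtain ⟨X, rfl, hX, hC⟩ := exists_eq_map_add_of_above hl hab
    have hXB := (avoidsAll_map_iff (strictMono_add_right C.length)).1
      (hlB.sublist (List.sublist_append_left _ C))
    exact ⟨(X, C), ⟨⟨hX, hXB⟩, hC, hCI, hlB.sublist (by simp)⟩, rfl⟩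

theorem wordSeries_eq_one_add (hB : ∀ p ∈ B, SkewIndecomposable p) :
    wordSeries B = 1 + wordSeries B * componentSeries B := by
  have hnil : AvoidsAll B ([] : List ℕ) :=
    avoidsAll_of_length_lt fun p hp => List.length_pos_iff.2 (hB p hp).1
  refine (genFun_permWords_eq_one_add hnil).trans (congrArg (1 + ·) ?_)
  rw [wordSeries, componentSeries,
    ← genFun_prod (finiteFibers_permWords _) (finiteFibers_permWords _)]
  refine (genFun_eq_of_bijOn (bijOn_skewSum hB) fun p _ => ?_).symm
  simp [skewSum]

theorem constantCoeff_componentSeries (B : List (List ℕ)) :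
    PowerSeries.constantCoeff (componentSeries B) = 0 := by
  have hempty : {l ∈ permWords fun l => SkewIndecomposable l ∧ AvoidsAll B l | l.length = 0} = ∅ :=
    Set.sep_eq_empty_iff_mem_false.2 fun l hl h => hl.2.1.1 (List.length_eq_zero_iff.1 h)
  rw [← PowerSeries.coeff_zero_eq_constantCoeff_apply, componentSeries, genFun,
    PowerSeries.coeff_mk, hempty]
  simp

theorem constantCoeff_wordSeries (hB : ∀ p ∈ B, SkewIndecomposable p) :
    PowerSeries.constantCoeff (wordSeries B) = 1 := by
  simpa [constantCoeff_componentSeries] using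
    congrArg PowerSeries.constantCoeff (wordSeries_eq_one_add hB)

end Components

section PrefixedSeries

/-- The generating function of the pairs in `permPairs Q` with first part of length `j`, where
only the letters of the second part count towards the size. -/
noncomputable def pairSeries (Q : List ℕ → List ℕ → Prop) (j : ℕ) : ℤ⟦X⟧ :=
  genFun (fun p => p.2.length) (permPairs fun J L => J.length = j ∧ Q J L)

/-- The generating function of the prefixed components whose prefix has more than `j` letters;
the first `j` letters of the prefix do not count towards the size. -/
noncomputable def longPrefixSeries (j : ℕ) : ℤ⟦X⟧ :=
  genFun (fun p => p.1.length + p.2.length - j)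
    (permPairs fun K C => j < K.length ∧ PrefixedComponent K C)

variable {Q : List ℕ → List ℕ → Prop} {K C L P : List ℕ} {j : ℕ}

theorem finiteFibers_pairSeries (Q : List ℕ → List ℕ → Prop) (j : ℕ) :
    FiniteFibers (fun p => p.2.length) (permPairs fun J L => J.length = j ∧ Q J L) :=
  fun n => (finiteFibers_permPairs _ (j + n)).subset
    fun _ ⟨hp, hn⟩ => ⟨hp, congrArg₂ (· + ·) hp.2.1 hn⟩

theorem finiteFibers_longPrefixSeries (j : ℕ) :
    FiniteFibers (fun p => p.1.length + p.2.length - j)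
      (permPairs fun K C => j < K.length ∧ PrefixedComponent K C) :=
  fun n => (finiteFibers_permPairs _ (n + j)).subset fun p ⟨hp, hn⟩ => ⟨hp, by
    have := hp.2.1
    dsimp only at hn ⊢
    omega⟩

theorem pairSeries_zero : pairSeries Q 0 = genFun List.length (permWords (Q [])) := by
  refine (genFun_eq_of_bijOn (f := Prod.mk []) ⟨?_, ?_, ?_⟩ fun _ _ => rfl).symm
  · exact fun l ⟨hl, hQ⟩ => ⟨hl, rfl, hQ⟩
  · exact fun l _ l' _ h => (Prod.mk.inj h).2
  · rintro ⟨J, L⟩ ⟨hL, hJ, hQ⟩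
    obtain rfl := List.length_eq_zero_iff.1 hJ
    exact ⟨L, ⟨hL, hQ⟩, rfl⟩

theorem prefixedWord_nil_iff : PrefixedWord [] L ↔ AvoidsAll prefixBasis L :=
  ⟨fun h => h.avoids, fun h => ⟨.nil, h, by simp [NonInterleaving]⟩⟩

theorem prefixedComponent_nil_iff :
    PrefixedComponent [] C ↔ SkewIndecomposable C ∧ AvoidsAll prefixBasis C :=
  ⟨fun h => ⟨h.indecomposable, h.avoids⟩,
    fun ⟨hC, hA⟩ => ⟨prefixedWord_nil_iff.2 hA, hC, by simp⟩⟩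

theorem pairSeries_prefixedWord_zero : pairSeries PrefixedWord 0 = wordSeries prefixBasis := by
  rw [pairSeries_zero, wordSeries]
  exact congrArg (fun A => genFun _ (permWords A)) (funext fun _ => propext prefixedWord_nil_iff)

theorem pairSeries_prefixedComponent_zero :
    pairSeries PrefixedComponent 0 = componentSeries prefixBasis := by
  rw [pairSeries_zero, componentSeries]
  exact congrArg (fun A => genFun _ (permWords A))
    (funext fun _ => propext prefixedComponent_nil_iff)

theorem longPrefixSeries_eq (j : ℕ) :
    longPrefixSeries j = PowerSeries.X *
      (pairSeries PrefixedComponent (j + 1) + longPrefixSeries (j + 1)) := by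
  have heq : {p ∈ permPairs fun K C => j < K.length ∧ PrefixedComponent K C |
      p.1.length = j + 1} = permPairs fun K C => K.length = j + 1 ∧ PrefixedComponent K C := by
    ext p
    simp only [permPairs, Set.mem_ofPred_eq]
    grind
  have hne : {p ∈ permPairs fun K C => j < K.length ∧ PrefixedComponent K C |
      ¬ p.1.length = j + 1} = permPairs fun K C => j + 1 < K.length ∧ PrefixedComponent K C := by
    ext p
    simp only [permPairs, Set.mem_ofPred_eq]
    grind
  rw [longPrefixSeries, genFun_eq_add (finiteFibers_longPrefixSeries j)
    (fun p => p.1.length = j + 1), heq, hne, pairSeries, longPrefixSeries, mul_add,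
    ← genFun_add_one, ← genFun_add_one]
  congr 1
  · refine genFun_congr fun p ⟨_, hp, _⟩ => by omega
  · refine genFun_congr fun p ⟨_, hp, _⟩ => by omega

theorem bijOn_concat_max :
    Set.BijOn (fun p : List ℕ × List ℕ => (p.1, p.2 ++ [p.1.length + p.2.length]))
      (permPairs fun J L => J.length = j ∧ PrefixedWord J L)
      {p ∈ permPairs fun J C => J.length = j ∧ PrefixedComponent J C | EndsWithMax p.2} := by
  refine ⟨?_, ?_, ?_⟩
  · rintro ⟨J, L⟩ ⟨hJL, hJ, h⟩
    dsimp only at hJL hJ h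
    have hM : ∀ x ∈ J ++ L, x < J.length + L.length := by simpa using hJL.2
    refine ⟨⟨?_, hJ, (prefixedComponent_concat_iff hM).2 h⟩, L, _, rfl,
      (List.forall_mem_append.1 hM).2⟩
    simpa using (isPermWord_concat_iff hM).2 ⟨by simp, hJL⟩
  · rintro ⟨J, L⟩ - ⟨J', L'⟩ - h
    obtain ⟨rfl, hL⟩ := Prod.mk.inj h
    obtain rfl : L = L' := (List.append_inj' hL rfl).1
    rfl
  · rintro ⟨J, C⟩ ⟨⟨hJC, hJ, h⟩, L, M, rfl, hLM⟩
    dsimp only at hJC hJ h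
    have hJM : ∀ a ∈ J, a < M := fun a ha => by
      obtain ⟨m, hm, ham⟩ := h.exists_gt a ha
      rcases List.mem_append.1 hm with hm | hm
      · exact ham.trans (hLM m hm)
      · rwa [← List.mem_singleton.1 hm]
    have hM : ∀ x ∈ J ++ L, x < M := List.forall_mem_append.2 ⟨hJM, hLM⟩
    rw [← List.append_assoc] at hJC
    obtain ⟨rfl, hJL⟩ := (isPermWord_concat_iff hM).1 hJC
    exact ⟨(J, L), ⟨hJL, hJ, (prefixedComponent_concat_iff hM).1 h⟩, by simp⟩

theorem isPermWord_insert_iff (hY : IsPermWord (K ++ C)) :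
    IsPermWord (K ++ P.map (· + (K ++ C).length) ++ C) ↔ IsPermWord P := by
  rw [List.append_assoc, isPermWord_congr (List.perm_append_comm_assoc _ _ _)]
  exact isPermWord_skewSum_iff.trans (and_iff_left hY)

theorem exists_eq_map_add_of_insert (h : IsPermWord (K ++ P ++ C)) (hP : Above P (K ++ C)) :
    ∃ P', P = P'.map (· + (K ++ C).length) ∧ IsPermWord P' ∧ IsPermWord (K ++ C) := by
  rw [List.append_assoc, isPermWord_congr (List.perm_append_comm_assoc _ _ _)] at h
  exact exists_eq_map_add_of_above h hP

theorem bijOn_insert_block :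
    Set.BijOn (fun p : List ℕ × List ℕ × List ℕ => (p.2.1.take j,
        p.2.1.drop j ++ p.1.map (· + (p.2.1 ++ p.2.2).length) ++ p.2.2))
      ((permWords fun P => P ≠ [] ∧ AvoidsAll prefixBasis P) ×ˢ
        permPairs fun K C => j < K.length ∧ PrefixedComponent K C)
      {p ∈ permPairs fun J C => J.length = j ∧ PrefixedComponent J C | ¬ EndsWithMax p.2} := by
  refine ⟨?_, ?_, ?_⟩
  · rintro ⟨P, K, C⟩ ⟨⟨hP, hP₀, hPA⟩, hKC, hj, h⟩
    dsimp only at hP hP₀ hPA hKC hj h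
    have hab := hKC.above_map_add P
    rw [← K.take_append_drop j] at h
    refine ⟨⟨?_, by simp [hj.le], h.insert_block (by simpa using hj)
      ((avoidsAll_map_iff (strictMono_add_right _)).2 hPA) (by simpa using hab)⟩,
      not_endsWithMax_of_above (by simpa using hP₀) h.indecomposable.1 (above_append_right.1 hab).2⟩
    dsimp only
    rw [← List.append_assoc, ← List.append_assoc, List.take_append_drop]
    exact (isPermWord_insert_iff hKC).2 hP
  · rintro ⟨P, K, C⟩ ⟨⟨-, hP, -⟩, hKC, -, h⟩ ⟨P', K', C'⟩ ⟨⟨-, hP', -⟩, hKC', -, h'⟩ heq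
    dsimp only at hP hKC h hP' hKC' h' heq
    obtain ⟨htake, hdrop⟩ := Prod.mk.inj heq
    obtain ⟨hI, hPP, rfl⟩ := eq_of_insert_block hdrop h.indecomposable h'.indecomposable
      (by simpa using hP) (by simpa using hP') (fun a ha => h.exists_gt a (List.mem_of_mem_drop ha))
      (fun a ha => h'.exists_gt a (List.mem_of_mem_drop ha))
      (above_append_right.1 (hKC.above_map_add P)).2
      (above_append_right.1 (hKC'.above_map_add P')).2
    obtain rfl : K = K' := by rw [← K.take_append_drop j, htake, hI, K'.take_append_drop]
    rw [map_add_right_injective _ hPP]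
  · rintro ⟨J, C⟩ ⟨⟨hJC, rfl, h⟩, hmax⟩
    dsimp only at hJC h hmax
    obtain ⟨I, P, C, rfl, hI, hP, hPC, hIC, hPA⟩ := h.exists_eq_insert_block hJC.1 hmax
    obtain ⟨P, rfl, hP', hJIC⟩ :=
      exists_eq_map_add_of_insert (K := J ++ I) (by simpa using hJC) hPC
    exact ⟨(P, J ++ I, C), ⟨⟨hP', by simpa using hP,
      (avoidsAll_map_iff (strictMono_add_right _)).1 hPA⟩, hJIC,
      by simpa [List.length_pos_iff] using hI, hIC⟩, by simp⟩

theorem pairSeries_prefixedComponent_eq (j : ℕ) :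
    pairSeries PrefixedComponent j = PowerSeries.X * pairSeries PrefixedWord j +
      (wordSeries prefixBasis - 1) * longPrefixSeries j := by
  have hF : wordSeries prefixBasis - 1 =
      genFun List.length (permWords fun P => P ≠ [] ∧ AvoidsAll prefixBasis P) :=
    sub_eq_iff_eq_add'.2 (genFun_permWords_eq_one_add (avoidsAll_of_length_lt (by decide)))
  rw [pairSeries, genFun_eq_add (finiteFibers_pairSeries _ j) (fun p => EndsWithMax p.2), hF,
    pairSeries, longPrefixSeries, ← genFun_add_one,
    ← genFun_prod (finiteFibers_permWords _) (finiteFibers_longPrefixSeries j)]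
  congr 1
  · exact (genFun_eq_of_bijOn bijOn_concat_max fun p _ => by simp).symm
  · refine (genFun_eq_of_bijOn bijOn_insert_block ?_).symm
    rintro ⟨P, K, C⟩ ⟨-, -, hK, -⟩
    dsimp only at hK ⊢
    simp only [List.length_append, List.length_drop, List.length_map]
    omega

end PrefixedSeries

section PrefixedSeriesRecursion

/-- The generating function of the prefixed components with `j` letters in their prefix and a letter
below the whole prefix. -/
noncomputable def lowSeries (j : ℕ) : ℤ⟦X⟧ :=
  pairSeries (fun J C => PrefixedComponent J C ∧ ∃ c ∈ C, ∀ a ∈ J, c < a) j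

variable {J C X Y B₀ B₁ : List ℕ} {a j : ℕ}

theorem perm_insert_head {α : Type*} {a : α} {J X Y : List α} :
    a :: J ++ (X ++ Y) ~ (J ++ X) ++ (a :: Y) := by
  simpa using (List.perm_middle (a := a) (l₁ := J ++ X) (l₂ := Y)).symm

theorem isPermWord_insert_head (hJX : IsPermWord (J ++ X)) (hY : IsPermWord Y) :
    IsPermWord (Y.length :: J.map (· + (Y.length + 1)) ++
      (X.map (· + (Y.length + 1)) ++ Y)) := by
  rw [isPermWord_congr perm_insert_head, ← List.map_append]
  refine isPermWord_skewSum_iff (Y := Y.length :: Y).2 ⟨hJX, ?_⟩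
  exact (isPermWord_congr (List.perm_append_singleton _ Y)).1
    ((isPermWord_concat_iff hY.2).2 ⟨rfl, hY⟩)

theorem exists_eq_map_add_of_insert_head (h : IsPermWord (a :: J ++ (X ++ Y)))
    (hJX : ∀ x ∈ J ++ X, a < x) (hY : ∀ y ∈ Y, y < a) :
    a = Y.length ∧ IsPermWord Y ∧ ∃ J' X', J = J'.map (· + (Y.length + 1)) ∧
      X = X'.map (· + (Y.length + 1)) ∧ IsPermWord (J' ++ X') := by
  obtain ⟨Z, hZ, hZp, haY⟩ := exists_eq_map_add_of_above ((isPermWord_congr perm_insert_head).1 h)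
    fun x hx => List.forall_mem_cons.2 ⟨hJX x hx, fun y hy => (hY y hy).trans (hJX x hx)⟩
  obtain ⟨ha, hYp⟩ := (isPermWord_concat_iff hY).1
    ((isPermWord_congr (List.perm_append_singleton a Y)).2 haY)
  obtain ⟨J', X', rfl, rfl, rfl⟩ := List.map_eq_append_iff.1 hZ.symm
  exact ⟨ha, hYp, J', X', rfl, rfl, hZp⟩

theorem bijOn_cons_min :
    Set.BijOn (fun p : List ℕ × List ℕ => (0 :: p.1.map (· + 1), p.2.map (· + 1)))
      (permPairs fun J C => J.length = j ∧ PrefixedComponent J C)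
      {p ∈ permPairs fun J C => J.length = j + 1 ∧ PrefixedComponent J C |
        ¬ ∃ c ∈ p.2, ∀ a ∈ p.1, c < a} := by
  have hcons : ∀ {J C : List ℕ}, PrefixedComponent (0 :: J.map (· + 1)) (C.map (· + 1)) ↔
      PrefixedComponent J C := fun {J C} =>
    (prefixedComponent_cons_iff (by simp [or_imp, forall_and])).trans
      (prefixedComponent_map_iff (strictMono_add_right 1))
  refine ⟨?_, ?_, ?_⟩
  · rintro ⟨J, C⟩ ⟨hJC, hJ, h⟩
    exact ⟨⟨by simpa using isPermWord_insert_head hJC (Y := []) (by simp [IsPermWord]),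
      by simpa using hJ, hcons.2 h⟩, by simp⟩
  · rintro ⟨J, C⟩ - ⟨J', C'⟩ - h
    obtain ⟨hJ, hC⟩ := Prod.mk.inj h
    exact Prod.ext (map_add_right_injective 1 (List.cons.inj hJ).2) (map_add_right_injective 1 hC)
  · rintro ⟨J, C⟩ ⟨⟨hJC, hJ, h⟩, hlow⟩
    dsimp only at hJC hJ h hlow
    obtain ⟨a, J, rfl⟩ := List.exists_cons_of_length_eq_add_one hJ
    have haJ : ∀ b ∈ J, a < b := fun b hb => List.rel_of_pairwise_cons h.sorted hb
    have haC : ∀ c ∈ C, a < c := fun c hc => by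
      refine lt_of_le_of_ne (not_lt.1 fun hca => hlow ⟨c, hc, List.forall_mem_cons.2
        ⟨hca, fun b hb => hca.trans (haJ b hb)⟩⟩) ?_
      exact (List.nodup_append.1 hJC.1).2.2 a (by simp) c hc
    obtain ⟨rfl, -, J, C, rfl, rfl, hp⟩ := exists_eq_map_add_of_insert_head (Y := [])
      (by simpa using hJC) (List.forall_mem_append.2 ⟨haJ, haC⟩) (by simp)
    exact ⟨(J, C), ⟨hp, by simpa using hJ, hcons.1 h⟩, rfl⟩

theorem pairSeries_prefixedComponent_succ (j : ℕ) :
    pairSeries PrefixedComponent (j + 1) =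
      lowSeries (j + 1) + pairSeries PrefixedComponent j := by
  have hlow : {p ∈ permPairs fun J C => J.length = j + 1 ∧ PrefixedComponent J C |
      ∃ c ∈ p.2, ∀ a ∈ p.1, c < a} = permPairs fun J C =>
        J.length = j + 1 ∧ PrefixedComponent J C ∧ ∃ c ∈ C, ∀ a ∈ J, c < a := by
    ext p
    simp only [permPairs, Set.mem_ofPred_eq, and_assoc]
  rw [pairSeries, genFun_eq_add (finiteFibers_pairSeries _ (j + 1))
    (fun p => ∃ c ∈ p.2, ∀ a ∈ p.1, c < a), hlow]
  exact congrArg (lowSeries (j + 1) + ·)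
    (genFun_eq_of_bijOn bijOn_cons_min fun _ _ => by simp).symm

theorem prefixedWord_insert_head_iff (hY : IsPermWord Y) :
    PrefixedWord (Y.length :: J.map (· + (Y.length + 1))) (X.map (· + (Y.length + 1)) ++ Y) ↔
      PrefixedWord J X ∧ AvoidsAll prefixBasis Y := by
  have hJX : ∀ x ∈ J.map (· + (Y.length + 1)) ++ X.map (· + (Y.length + 1)), Y.length < x := by
    simp only [List.forall_mem_append, List.forall_mem_map]
    exact ⟨fun x _ => by omega, fun x _ => by omega⟩
  have hab : Above (Y.length :: J.map (· + (Y.length + 1)) ++ X.map (· + (Y.length + 1))) Y :=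
    List.forall_mem_cons.2 ⟨hY.2, fun x hx y hy => (hY.2 y hy).trans (hJX x hx)⟩
  rw [prefixedWord_append_iff_left hab, prefixedWord_cons_iff hJX,
    prefixedWord_map_iff (strictMono_add_right _)]

theorem bijOn_insert_head :
    Set.BijOn (fun p : (List ℕ × List ℕ) × List ℕ =>
        (p.2.length :: p.1.1.map (· + (p.2.length + 1)),
          p.1.2.map (· + (p.2.length + 1)) ++ p.2))
      ((permPairs fun J X => J.length = j ∧ PrefixedWord J X) ×ˢ
        permWords (AvoidsAll prefixBasis))
      {p ∈ permPairs fun J L => J.length = j + 1 ∧ PrefixedWord J L |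
        ¬ Straddles p.2 (p.1.headD 0)} := by
  have hlt : ∀ (X : List ℕ) (s : ℕ), ∀ x ∈ X.map (· + (s + 1)), s < x := fun X s =>
    List.forall_mem_map.2 fun x _ => by omega
  refine ⟨?_, ?_, ?_⟩
  · rintro ⟨⟨J, X⟩, Y⟩ ⟨⟨hJX, hJ, h⟩, hY, hYA⟩
    exact ⟨⟨isPermWord_insert_head hJX hY, by simpa using hJ,
      (prefixedWord_insert_head_iff hY).2 ⟨h, hYA⟩⟩, not_straddles_append (hlt X _) hY.2⟩
  · rintro ⟨⟨J, X⟩, Y⟩ ⟨-, hY, -⟩ ⟨⟨J', X'⟩, Y'⟩ ⟨-, hY', -⟩ h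
    obtain ⟨hcons, hXY⟩ := Prod.mk.inj h
    obtain ⟨hlen, hJ⟩ := List.cons.inj hcons
    dsimp only at hY hY' hlen hJ hXY
    rw [← hlen] at hXY hJ
    obtain ⟨hX, rfl⟩ := eq_of_append_of_forall_lt hXY (hlt X _) hY.2 (hlt X' _)
      (hlen ▸ hY'.2)
    rw [map_add_right_injective _ hJ, map_add_right_injective _ hX]
  · rintro ⟨J, L⟩ ⟨⟨hJL, hJ, h⟩, hs⟩
    dsimp only at hJL hJ h hs
    obtain ⟨a, J, rfl⟩ := List.exists_cons_of_length_eq_add_one hJ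
    have haL : a ∉ L := fun ha => (List.nodup_append.1 hJL.1).2.2 a (by simp) a ha rfl
    obtain ⟨X, Y, rfl, hX, hY⟩ := exists_eq_append_of_not_straddles haL hs
    obtain ⟨rfl, hYp, J, X, rfl, rfl, hJX⟩ := exists_eq_map_add_of_insert_head hJL
      (List.forall_mem_append.2 ⟨fun b hb => List.rel_of_pairwise_cons h.sorted hb, hX⟩) hY
    obtain ⟨hX, hYA⟩ := (prefixedWord_insert_head_iff hYp).1 h
    exact ⟨((J, X), Y), ⟨⟨hJX, by simpa using hJ, hX⟩, hYp, hYA⟩, rfl⟩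

theorem perm_surround {α : Type*} {J C B₀ B₁ : List α} :
    J ++ (B₀ ++ C ++ B₁) ~ B₀ ++ (J ++ C ++ B₁) := by
  simpa using List.perm_append_comm_assoc J B₀ (C ++ B₁)

/-- The word `C` with the block `B₀` inserted before it, above `J` and `C`, and the block `B₁`
inserted after it, below `J` and `C`; the prefix `J` becomes `J.map (· + B₁.length)`. -/
def surround (B₀ J C B₁ : List ℕ) : List ℕ :=
  B₀.map (· + (skewSum (J ++ C) B₁).length) ++ C.map (· + B₁.length) ++ B₁

theorem isPermWord_surround (hB₀ : IsPermWord B₀) (hJC : IsPermWord (J ++ C))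
    (hB₁ : IsPermWord B₁) :
    IsPermWord (J.map (· + B₁.length) ++ surround B₀ J C B₁) := by
  rw [surround, isPermWord_congr perm_surround, ← List.map_append]
  exact isPermWord_skewSum_iff.2 ⟨hB₀, isPermWord_skewSum_iff.2 ⟨hJC, hB₁⟩⟩

theorem exists_eq_map_add_of_surround (h : IsPermWord (J ++ (B₀ ++ C ++ B₁)))
    (h₀ : Above B₀ (J ++ C)) (h₁ : Above (B₀ ++ (J ++ C)) B₁) :
    ∃ B₀' J' C', IsPermWord B₀' ∧ IsPermWord (J' ++ C') ∧ IsPermWord B₁ ∧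
      J = J'.map (· + B₁.length) ∧ C = C'.map (· + B₁.length) ∧
        B₀ = B₀'.map (· + (skewSum (J' ++ C') B₁).length) := by
  obtain ⟨h₀₁, hJC₁⟩ := above_append_left.1 h₁
  obtain ⟨B₀', rfl, hB₀, hJCB⟩ := exists_eq_map_add_of_above
    ((isPermWord_congr perm_surround).1 h) (above_append_right.2 ⟨h₀, h₀₁⟩)
  obtain ⟨Z, hZ, hJC, hB₁⟩ := exists_eq_map_add_of_above hJCB hJC₁
  obtain ⟨J', C', rfl, rfl, rfl⟩ := List.map_eq_append_iff.1 hZ.symm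
  exact ⟨B₀', J', C', hB₀, hJC, hB₁, rfl, rfl, by simp [skewSum]⟩

theorem above_surround (hJC : IsPermWord (J ++ C)) (hB₁ : IsPermWord B₁) :
    Above (B₀.map (· + (skewSum (J ++ C) B₁).length))
        (J.map (· + B₁.length) ++ C.map (· + B₁.length)) ∧
      Above (J.map (· + B₁.length)) B₁ ∧
      Above (B₀.map (· + (skewSum (J ++ C) B₁).length) ++ C.map (· + B₁.length)) B₁ := by
  have h₀ := (isPermWord_skewSum_iff.2 ⟨hJC, hB₁⟩).above_map_add B₀
  have h₁ := hB₁.above_map_add (J ++ C)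
  rw [List.map_append, above_append_left] at h₁
  obtain ⟨h₀, h₀₁⟩ := above_append_right.1 h₀
  exact ⟨by rwa [List.map_append] at h₀, h₁.1, above_append_left.2 ⟨h₀₁, h₁.2⟩⟩

theorem prefixedWord_surround_iff (hJC : IsPermWord (J ++ C)) (hB₁ : IsPermWord B₁) :
    PrefixedWord (J.map (· + B₁.length)) (surround B₀ J C B₁) ↔
      (AvoidsAll prefixBasis B₀ ∧ PrefixedWord J C) ∧ AvoidsAll prefixBasis B₁ := by
  obtain ⟨h₀, hJ, h₁⟩ := above_surround (B₀ := B₀) hJC hB₁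
  rw [surround, prefixedWord_append_iff_left (above_append_left.2 ⟨hJ, h₁⟩),
    prefixedWord_append_iff_right h₀, avoidsAll_map_iff (strictMono_add_right _),
    prefixedWord_map_iff (strictMono_add_right _)]

theorem PrefixedComponent.straddles_surround (h : PrefixedComponent J C) (ha : a ∈ J)
    (hnd : (J ++ C).Nodup) (hlow : ∃ c ∈ C, ∀ b ∈ J, c < b) : Straddles (X ++ C ++ Y) a := by
  obtain ⟨c, hc, hlow⟩ := hlow
  have haC : a ∉ C := fun haC => (List.nodup_append.1 hnd).2.2 a ha a haC rfl
  obtain ⟨c, d, hcd, hca, had⟩ :=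
    h.indecomposable.straddles haC ⟨c, hc, hlow a ha⟩ (h.exists_gt a ha)
  exact ⟨c, d, hcd.trans (List.IsInfix.sublist ⟨X, Y, rfl⟩), hca, had⟩

theorem eq_of_surround {B₀' J' C' B₁' : List ℕ} (hJC : IsPermWord (J ++ C))
    (h : PrefixedComponent J C) (hB₁ : IsPermWord B₁) (hJC' : IsPermWord (J' ++ C'))
    (h' : PrefixedComponent J' C') (hB₁' : IsPermWord B₁') (hne : J ≠ [])
    (hJ : J.map (· + B₁.length) = J'.map (· + B₁'.length))
    (hL : surround B₀ J C B₁ = surround B₀' J' C' B₁') :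
    B₀ = B₀' ∧ J = J' ∧ C = C' ∧ B₁ = B₁' := by
  obtain ⟨a, ha⟩ : ∃ a, a ∈ J.map (· + B₁.length) := List.exists_mem_of_ne_nil _ (by simpa)
  have ha' : a ∈ J'.map (· + B₁'.length) := hJ ▸ ha
  have hM := (prefixedComponent_map_iff (strictMono_add_right B₁.length)).2 h
  have hM' := (prefixedComponent_map_iff (strictMono_add_right B₁'.length)).2 h'
  obtain ⟨h₀, hJB, h₁⟩ := above_surround (B₀ := B₀) hJC hB₁
  obtain ⟨h₀', hJB', h₁'⟩ := above_surround (B₀ := B₀') hJC' hB₁'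
  obtain ⟨hB₀, hC, rfl⟩ := eq_of_append_component hL hM.indecomposable hM'.indecomposable
    (above_append_right.1 h₀).2 (above_append_right.1 h₀').2 h₁ h₁' (hJB a ha) (hJB' a ha')
    (hM.exists_gt a ha) (hM'.exists_gt a ha')
  obtain rfl := map_add_right_injective _ hJ
  obtain rfl := map_add_right_injective _ hC
  exact ⟨map_add_right_injective _ hB₀, rfl, rfl, rfl⟩

theorem bijOn_surround :
    Set.BijOn (fun p : List ℕ × (List ℕ × List ℕ) × List ℕ =>
        (p.2.1.1.map (· + p.2.2.length), surround p.1 p.2.1.1 p.2.1.2 p.2.2))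
      (permWords (AvoidsAll prefixBasis) ×ˢ
        (permPairs fun J C => J.length = j + 1 ∧ PrefixedComponent J C ∧ ∃ c ∈ C, ∀ a ∈ J, c < a) ×ˢ
          permWords (AvoidsAll prefixBasis))
      {p ∈ permPairs fun J L => J.length = j + 1 ∧ PrefixedWord J L |
        Straddles p.2 (p.1.headD 0)} := by
  refine ⟨?_, ?_, ?_⟩
  · rintro ⟨B₀, ⟨J, C⟩, B₁⟩ ⟨⟨hB₀, hA₀⟩, ⟨hJC, hJ, h, hlow⟩, hB₁, hA₁⟩
    dsimp only at hB₀ hA₀ hJC hJ h hlow hB₁ hA₁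
    refine ⟨⟨isPermWord_surround hB₀ hJC hB₁, by simpa using hJ,
      (prefixedWord_surround_iff hJC hB₁).2 ⟨⟨hA₀, h.toPrefixedWord⟩, hA₁⟩⟩, ?_⟩
    obtain ⟨a, J, rfl⟩ := List.exists_cons_of_length_eq_add_one hJ
    have hp := (isPermWord_skewSum_iff.2 ⟨hJC, hB₁⟩).1
    rw [skewSum, List.map_append] at hp
    exact ((prefixedComponent_map_iff (strictMono_add_right _)).2 h).straddles_surround
      (by simp) (hp.sublist (by simp)) (by simpa using hlow)
  · rintro ⟨B₀, ⟨J, C⟩, B₁⟩ ⟨-, ⟨hJC, hJ, h, -⟩, hB₁, -⟩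
      ⟨B₀', ⟨J', C'⟩, B₁'⟩ ⟨-, ⟨hJC', -, h', -⟩, hB₁', -⟩ heq
    dsimp only at hJC hJ h hB₁ hJC' h' hB₁' heq
    obtain ⟨hJJ, hL⟩ := Prod.mk.inj heq
    have hne : J ≠ [] := fun hnil => by simp [hnil] at hJ
    obtain ⟨rfl, rfl, rfl, rfl⟩ := eq_of_surround hJC h hB₁ hJC' h' hB₁' hne hJJ hL
    rfl
  · rintro ⟨J, L⟩ ⟨⟨hJL, hJ, h⟩, hs⟩
    dsimp only at hJL hJ h hs
    obtain ⟨a, J, rfl⟩ := List.exists_cons_of_length_eq_add_one hJ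
    obtain ⟨B₀, C, B₁, rfl, hC, hlow, hA₀, hA₁, h₀, h₁⟩ := h.exists_component hJL.1 hs
    obtain ⟨B₀, J', C, hB₀, hJC, hB₁, hJ', rfl, rfl⟩ := exists_eq_map_add_of_surround hJL h₀ h₁
    have hlow' : ∃ c ∈ C.map (· + B₁.length), ∀ b ∈ a :: J, c < b := by
      obtain ⟨c, hc, hca⟩ := hlow
      exact ⟨c, hc, List.forall_mem_cons.2
        ⟨hca, fun b hb => hca.trans (List.rel_of_pairwise_cons h.sorted hb)⟩⟩
    rw [hJ'] at hJ hC hlow' ⊢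
    exact ⟨(B₀, (J', C), B₁), ⟨⟨hB₀, (avoidsAll_map_iff (strictMono_add_right _)).1 hA₀⟩,
      ⟨hJC, by simpa using hJ, (prefixedComponent_map_iff (strictMono_add_right _)).1 hC,
        by simpa using hlow'⟩, hB₁, hA₁⟩, rfl⟩

theorem pairSeries_prefixedWord_succ (j : ℕ) :
    pairSeries PrefixedWord (j + 1) = pairSeries PrefixedWord j * wordSeries prefixBasis +
      wordSeries prefixBasis * (lowSeries (j + 1) * wordSeries prefixBasis) := by
  have hfin := finiteFibers_permWords (AvoidsAll prefixBasis)
  have hlow : FiniteFibers _ _ := finiteFibers_pairSeries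
    (fun J C => PrefixedComponent J C ∧ ∃ c ∈ C, ∀ a ∈ J, c < a) (j + 1)
  rw [pairSeries, genFun_eq_add (finiteFibers_pairSeries _ (j + 1))
    (fun p => ¬ Straddles p.2 (p.1.headD 0))]
  simp only [not_not]
  congr 1
  · rw [pairSeries, wordSeries, ← genFun_prod (finiteFibers_pairSeries _ j) hfin]
    exact (genFun_eq_of_bijOn bijOn_insert_head fun p _ => by simp).symm
  · rw [lowSeries, pairSeries, wordSeries, ← genFun_prod hlow hfin,
      ← genFun_prod hfin (hlow.prod hfin)]
    exact (genFun_eq_of_bijOn bijOn_surround fun p _ => by simp [surround]).symm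

end PrefixedSeriesRecursion

section Separable

theorem bijOn_reverse :
    Set.BijOn List.reverse (permWords fun l => SkewIndecomposable l ∧ AvoidsAll separableBasis l)
      (permWords fun l => SkewIndecomposable l.reverse ∧ AvoidsAll separableBasis l) := by
  have hA : ∀ {l : List ℕ}, AvoidsAll separableBasis l → AvoidsAll separableBasis l.reverse :=
    AvoidsAll.reverse (by decide)
  refine ⟨?_, List.reverse_injective.injOn, ?_⟩
  · rintro l ⟨hl, hI, h⟩
    exact ⟨(isPermWord_congr l.reverse_perm).2 hl, by rwa [l.reverse_reverse], hA h⟩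
  · rintro l ⟨hl, hI, h⟩
    exact ⟨l.reverse, ⟨(isPermWord_congr l.reverse_perm).2 hl, hI, hA h⟩, l.reverse_reverse⟩

theorem permWords_indecomposable_inter_reverse :
    permWords (fun l => SkewIndecomposable l ∧ AvoidsAll separableBasis l) ∩
      permWords (fun l => SkewIndecomposable l.reverse ∧ AvoidsAll separableBasis l) = {[0]} := by
  ext l
  constructor
  · rintro ⟨⟨hl, hI, h⟩, -, hI', -⟩
    have hlen := h.length_eq_one hl.1 hI hI'
    obtain ⟨x, rfl⟩ := List.length_eq_one_iff.1 hlen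
    simpa using hl.2 x (by simp)
  · rintro rfl
    have hI : SkewIndecomposable [0] := skewIndecomposable_concat_max (L := []) (by simp)
    have hA : AvoidsAll separableBasis [0] := avoidsAll_of_length_lt (by decide)
    exact ⟨⟨by simp [IsPermWord], hI, hA⟩, by simp [IsPermWord], hI, hA⟩

theorem two_mul_componentSeries_separableBasis :
    2 * componentSeries separableBasis = wordSeries separableBasis - 1 + PowerSeries.X := by
  have hunion : permWords (fun l => SkewIndecomposable l ∧ AvoidsAll separableBasis l) ∪
      permWords (fun l => SkewIndecomposable l.reverse ∧ AvoidsAll separableBasis l) =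
        permWords fun l => l ≠ [] ∧ AvoidsAll separableBasis l := by
    ext l
    constructor
    · rintro (⟨hl, hI, h⟩ | ⟨hl, hI, h⟩)
      · exact ⟨hl, hI.1, h⟩
      · exact ⟨hl, by simpa using hI.1, h⟩
    · rintro ⟨hl, hne, h⟩
      exact (skewIndecomposable_or_reverse hne).imp (fun hI => ⟨hl, hI, h⟩) fun hI => ⟨hl, hI, h⟩
  have hcount := genFun_union_add_inter (size := List.length)
    (finiteFibers_permWords fun l => SkewIndecomposable l ∧ AvoidsAll separableBasis l)
    (finiteFibers_permWords fun l => SkewIndecomposable l.reverse ∧ AvoidsAll separableBasis l)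
  rw [hunion, permWords_indecomposable_inter_reverse, genFun_singleton,
    ← genFun_eq_of_bijOn bijOn_reverse fun l _ => l.length_reverse] at hcount
  have hword := genFun_permWords_eq_one_add
    (avoidsAll_of_length_lt (B := separableBasis) (l := ([] : List ℕ)) (by decide))
  rw [← two_mul] at hcount
  rw [componentSeries, ← hcount, wordSeries, hword]
  simp

end Separable

section PrefixSystem

variable {R : Type*} [CommRing R]

/-- The functional equations linking the series of the words avoiding 2143, 3142 and 246135 (`F`)
with those of the prefixed components (`E j`), the prefixed words (`V j`) with `j` letters in the
prefix, and the prefixed components with more letters in the prefix (`T j`). -/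
structure PrefixSystem (F : R⟦X⟧) (E V T : ℕ → R⟦X⟧) : Prop where
  word : F = 1 + F * E 0
  component : ∀ j, E j = PowerSeries.X * V j + (F - 1) * T j
  long : ∀ j, T j = PowerSeries.X * (E (j + 1) + T (j + 1))
  zero : V 0 = F
  succ : ∀ j, V (j + 1) = V j * F + F * ((E (j + 1) - E j) * F)

variable {F F' B K G : R⟦X⟧} {E V T E' V' T' : ℕ → R⟦X⟧}

theorem PrefixSystem.X_pow_dvd_sub (h : PrefixSystem F E V T) (h' : PrefixSystem F' E' V' T')
    (n : ℕ) :
    PowerSeries.X ^ n ∣ F - F' ∧ ∀ j, PowerSeries.X ^ n ∣ E j - E' j ∧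
      PowerSeries.X ^ n ∣ V j - V' j ∧ PowerSeries.X ^ n ∣ T j - T' j := by
  induction n with
  | zero => simp
  | succ n ih =>
    obtain ⟨ihF, ih⟩ := ih
    have hT : ∀ j, PowerSeries.X ^ (n + 1) ∣ T j - T' j := fun j => by
      rw [pow_succ', h.long, h'.long, ← mul_sub, add_sub_add_comm]
      exact mul_dvd_mul_left _ (dvd_add (ih _).1 (ih _).2.2)
    have hE : ∀ j, PowerSeries.X ^ (n + 1) ∣ E j - E' j := fun j => by
      rw [show E j - E' j = PowerSeries.X * (V j - V' j) + (F - 1) * (T j - T' j) +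
        PowerSeries.X * (F - F') * (E' (j + 1) + T' (j + 1)) by
          linear_combination h.component j - h'.component j + (F - F') * h'.long j]
      rw [pow_succ'] at hT ⊢
      exact dvd_add (dvd_add (mul_dvd_mul_left _ (ih j).2.1) ((hT j).mul_left _))
        ((mul_dvd_mul_left _ ihF).mul_right _)
    have hF : PowerSeries.X ^ (n + 1) ∣ F - F' := by
      rw [show F - F' = F * F' * (E 0 - E' 0) by linear_combination F' * h.word - F * h'.word]
      exact (hE 0).mul_left _
    refine ⟨hF, fun j => ⟨hE j, ?_, hT j⟩⟩
    induction j with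
    | zero => rwa [h.zero, h'.zero]
    | succ j ihV =>
      rw [show V (j + 1) - V' (j + 1) = F * (V j - V' j) + F ^ 2 * (E (j + 1) - E' (j + 1)) -
        F ^ 2 * (E j - E' j) + (V' j + (F + F') * (E' (j + 1) - E' j)) * (F - F') by
          linear_combination h.succ j - h'.succ j]
      exact dvd_add (dvd_sub (dvd_add (ihV.mul_left _) ((hE _).mul_left _)) ((hE j).mul_left _))
        (hF.mul_left _)

theorem PrefixSystem.unique (h : PrefixSystem F E V T) (h' : PrefixSystem F' E' V' T') :
    F = F' := by
  refine sub_eq_zero.1 (PowerSeries.ext fun n => ?_)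
  exact PowerSeries.X_pow_dvd_iff.1 (h.X_pow_dvd_sub h' (n + 1)).1 n n.lt_succ_self

theorem prefixSystem_geometric (hB : B = 1 + B * K) (hK : 2 * K = B - 1 + PowerSeries.X)
    (hG : (2 - B) * G = 1) :
    PrefixSystem B (fun j => K * G ^ j) (fun j => B * G ^ j) (fun j => (B - 1) * K * G ^ j) := by
  have hXB : PowerSeries.X * B = (B - 1) * (2 - B) := by
    linear_combination -B * hK - 2 * hB
  have hXG : PowerSeries.X * G = K := by
    have hBXG : B * (PowerSeries.X * G - K) = 0 := by
      linear_combination G * hXB + (B - 1) * hG + hB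
    linear_combination (1 - K) * hBXG - (PowerSeries.X * G - K) * hB
  refine ⟨by simpa using hB, fun j => ?_, fun j => ?_, by simp, fun j => ?_⟩
  · have hKX : K * (2 - B) = PowerSeries.X := by
      linear_combination PowerSeries.X * hG - (2 - B) * hXG
    linear_combination B * G ^ j * hKX
  · simp only [pow_succ]
    linear_combination (-K * G ^ j * B) * hXG + K * G ^ j * hB
  · simp only [pow_succ]
    linear_combination B * G ^ j * (hG + (G - 1) * hB)

end PrefixSystem

section Equality

theorem prefixSystem_prefixBasis :
    PrefixSystem (wordSeries prefixBasis) (pairSeries PrefixedComponent)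
      (pairSeries PrefixedWord) longPrefixSeries where
  word := by
    rw [pairSeries_prefixedComponent_zero]
    exact wordSeries_eq_one_add skewIndecomposable_of_mem_prefixBasis
  component := pairSeries_prefixedComponent_eq
  long := longPrefixSeries_eq
  zero := pairSeries_prefixedWord_zero
  succ j := by
    rw [pairSeries_prefixedWord_succ, pairSeries_prefixedComponent_succ, add_sub_cancel_right]

theorem wordSeries_prefixBasis : wordSeries prefixBasis = wordSeries separableBasis := by
  have hunit : IsUnit (2 - wordSeries separableBasis) := by
    rw [PowerSeries.isUnit_iff_constantCoeff, map_sub, map_ofNat,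
      constantCoeff_wordSeries skewIndecomposable_of_mem_separableBasis]
    norm_num
  obtain ⟨G, hG⟩ := hunit.exists_right_inv
  exact prefixSystem_prefixBasis.unique <| prefixSystem_geometric
    (wordSeries_eq_one_add skewIndecomposable_of_mem_separableBasis)
    two_mul_componentSeries_separableBasis hG

end Equality

section OneLine

variable {k n : ℕ}

/-- The one-line notation of `π`. -/
def word (π : Equiv.Perm (Fin n)) : List ℕ :=
  List.ofFn fun i => (π i : ℕ)

theorem ofFn_sublist_ofFn_iff {α : Type*} {u : Fin k → α} {v : Fin n → α} :
    List.ofFn u <+ List.ofFn v ↔ ∃ f : Fin k → Fin n, StrictMono f ∧ ∀ i, u i = v (f i) := by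
  rw [List.sublist_iff_exists_fin_orderEmbedding_get_eq]
  constructor
  · rintro ⟨f, hf⟩
    refine ⟨fun i => (f (i.cast List.length_ofFn.symm)).cast List.length_ofFn,
      fun i j hij => f.strictMono hij, fun i => ?_⟩
    simpa [Fin.cast] using hf (i.cast List.length_ofFn.symm)
  · rintro ⟨f, hf, h⟩
    refine ⟨OrderEmbedding.ofStrictMono
      (fun i => (f (i.cast List.length_ofFn)).cast List.length_ofFn.symm) fun i j hij => hf hij,
      fun i => ?_⟩
    simpa [Fin.cast] using h (i.cast List.length_ofFn)

theorem contains_iff_occurs {π : Equiv.Perm (Fin n)} {σ : Equiv.Perm (Fin k)} :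
    Contains π σ ↔ Occurs (word σ) (word π) := by
  have hmem : ∀ a, (σ a : ℕ) ∈ word σ := fun a => List.mem_ofFn.2 ⟨a, rfl⟩
  simp only [Occurs, word, List.map_ofFn, ofFn_sublist_ofFn_iff, Function.comp_apply]
  constructor
  · rintro ⟨f, hf, h⟩
    refine ⟨fun v => if hv : v < k then π (f (σ.symm ⟨v, hv⟩)) else 0, ?_, f, hf, by simp⟩
    intro v hv w hw hvw
    obtain ⟨a, rfl⟩ := List.mem_ofFn.1 hv
    obtain ⟨b, rfl⟩ := List.mem_ofFn.1 hw
    simpa using (h a b).1 hvw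
  · rintro ⟨g, hg, f, hf, h⟩
    refine ⟨f, hf, fun a b => ?_⟩
    rw [← Fin.val_fin_lt, ← hg.lt_iff_lt (hmem a) (hmem b), h, h, Fin.val_fin_lt]

theorem bijOn_word (A : List ℕ → Prop) :
    Set.BijOn word {π : Equiv.Perm (Fin n) | A (word π)} {l ∈ permWords A | l.length = n} := by
  refine ⟨fun π hπ => ⟨⟨⟨?_, ?_⟩, hπ⟩, List.length_ofFn⟩, ?_, ?_⟩
  · exact List.nodup_ofFn.2 (Fin.val_injective.comp π.injective)
  · simp [word]
  · exact fun π _ ρ _ h => Equiv.ext fun i => Fin.ext (congrFun (List.ofFn_injective h) i)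
  · rintro l ⟨⟨⟨hnd, hlt⟩, hA⟩, rfl⟩
    have hinj : Function.Injective fun i => (⟨l.get i, hlt _ (l.get_mem i)⟩ : Fin l.length) :=
      fun i j h => hnd.injective_get (Fin.mk.inj h)
    refine ⟨Equiv.ofBijective _ (Finite.injective_iff_bijective.1 hinj), ?_, ?_⟩
    · simpa [word] using hA
    · simp [word]

theorem natCast_card_avoidsAll (B : List (List ℕ)) :
    (Nat.card {π : Equiv.Perm (Fin n) // AvoidsAll B (word π)} : ℤ) =
      PowerSeries.coeff n (wordSeries B) := by
  have hword := bijOn_word (n := n) (AvoidsAll B)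
  rw [wordSeries, genFun, PowerSeries.coeff_mk, ← hword.image_eq, hword.injOn.ncard_image]
  rfl

theorem avoidsAll_prefixBasis_word_iff {π : Equiv.Perm (Fin n)} :
    AvoidsAll prefixBasis (word π) ↔ Avoids π p2143 ∧ Avoids π p3142 ∧ Avoids π p246135 := by
  simp only [Avoids, contains_iff_occurs, AvoidsAll, prefixBasis, List.forall_mem_cons]
  simp [word, p2143, p3142, p246135, List.ofFn_succ]

theorem avoidsAll_separableBasis_word_iff {π : Equiv.Perm (Fin n)} :
    AvoidsAll separableBasis (word π) ↔ Avoids π p2413 ∧ Avoids π p3142 := by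
  simp only [Avoids, contains_iff_occurs, AvoidsAll, separableBasis, List.forall_mem_cons]
  simp [word, p2413, p3142, List.ofFn_succ]

end OneLine

end WilfEquivalence

theorem wilf_equiv_2143_3142_246135_and_2413_3142 (n : ℕ) :
    Nat.card {π : Equiv.Perm (Fin n) //
        Avoids π p2143 ∧ Avoids π p3142 ∧ Avoids π p246135} =
      Nat.card {π : Equiv.Perm (Fin n) // Avoids π p2413 ∧ Avoids π p3142} := by
  simp only [← WilfEquivalence.avoidsAll_prefixBasis_word_iff,
    ← WilfEquivalence.avoidsAll_separableBasis_word_iff]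
  refine Nat.cast_injective (R := ℤ) ?_
  rw [WilfEquivalence.natCast_card_avoidsAll, WilfEquivalence.natCast_card_avoidsAll,
    WilfEquivalence.wordSeries_prefixBasis]
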